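/- arXiv:2604.02462 — 3 statements merged into one kernel-verified Lean document; each statement's English description precedes it below -/
import Mathlib

section
/- Let Ω be a bounded domain in ℂⁿ and let a, b ∈ Ω. Then for every ε > 0 there exist a positive integer N and complex constants c_α, indexed by multi-indices α ∈ ℕⁿ with |α| ≤ N, such that for every holomorphic function h on Ω with ∫_Ω |h|² dV < ∞, |h(b) − Σ_{|α| ≤ N} c_α (∂^α h)(a)| ≤ ε · (∫_Ω |h|² dV)^{1/2}. -/
open MeasureTheory Finset

/-- Complex partial derivative of `h : ℂⁿ → ℂ` in the `i`-th coordinate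
direction. -/
noncomputable def pderivC {n : ℕ} (i : Fin n) (h : (Fin n → ℂ) → ℂ) :
    (Fin n → ℂ) → ℂ :=
  fun z => fderiv ℂ h z (Pi.single i 1)

/-- Multi-index complex partial derivative `∂^α h = ∂^{|α|}h/∂z₁^{α₁}⋯∂zₙ^{αₙ}`. -/
noncomputable def mpderiv {n : ℕ} (α : Fin n → ℕ) :
    ((Fin n → ℂ) → ℂ) → ((Fin n → ℂ) → ℂ) :=
  ((List.finRange n).map fun i => (pderivC i)^[α i]).foldr (· ∘ ·) id

namespace NQ
open Metric Set Filter Topology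

variable {n : ℕ}

/-- Cauchy estimate for the Fréchet derivative. -/
lemma norm_fderiv_apply_le {f : (Fin n → ℂ) → ℂ} {z v : Fin n → ℂ} {s M : ℝ} (hs : 0 < s)
    (hf : ∀ y ∈ closedBall z s, DifferentiableAt ℂ f y)
    (hM : ∀ y ∈ closedBall z s, ‖f y‖ ≤ M) (hv : ‖v‖ ≤ 1) :
    ‖fderiv ℂ f z v‖ ≤ M / s := by
  have hmem : ∀ t ∈ closedBall (0:ℂ) s, z + t • v ∈ closedBall z s := by
    intro t ht
    simp only [mem_closedBall, dist_zero_right, dist_self_add_left, norm_smul] at ht ⊢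
    nlinarith [norm_nonneg t, norm_nonneg v]
  have hd : ∀ t ∈ closedBall (0:ℂ) s, HasDerivAt (fun t : ℂ => f (z + t • v))
      (fderiv ℂ f (z + t • v) v) t := by
    intro t ht
    have h1 : HasDerivAt (fun t : ℂ => z + t • v) v t := by
      simpa using ((hasDerivAt_id t).smul_const v).const_add z
    exact (hf _ (hmem t ht)).hasFDerivAt.comp_hasDerivAt t h1
  have h0 := hd 0 (by simp [hs.le])
  simp only [zero_smul, add_zero] at h0
  rw [← h0.deriv]
  refine Complex.norm_deriv_le_of_forall_mem_sphere_norm_le hs ?_ ?_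
  · apply DifferentiableOn.diffContOnCl
    rw [closure_ball _ hs.ne']
    exact fun t ht => (hd t ht).differentiableAt.differentiableWithinAt
  · exact fun t ht => hM _ (hmem t (sphere_subset_closedBall ht))

lemma norm_fderiv_le {f : (Fin n → ℂ) → ℂ} {z : Fin n → ℂ} {s M : ℝ} (hs : 0 < s)
    (hf : ∀ y ∈ closedBall z s, DifferentiableAt ℂ f y)
    (hM : ∀ y ∈ closedBall z s, ‖f y‖ ≤ M) :
    ‖fderiv ℂ f z‖ ≤ M / s := by
  have hM0 : 0 ≤ M := (norm_nonneg _).trans (hM z (by simp [hs.le]))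
  refine ContinuousLinearMap.opNorm_le_of_unit_norm (𝕜 := ℂ) (by positivity) ?_
  exact fun v hv => norm_fderiv_apply_le hs hf hM hv.le

lemma pderivC_differentiableOn {Ω : Set (Fin n → ℂ)} (hΩ : IsOpen Ω) (i : Fin n)
    {f : (Fin n → ℂ) → ℂ} (hf : DifferentiableOn ℂ f Ω) :
    DifferentiableOn ℂ (pderivC i f) Ω := by
  intro p hp
  apply DifferentiableAt.differentiableWithinAt
  obtain ⟨ρ, hρ, hρΩ⟩ := Metric.nhds_basis_closedBall.mem_iff.1 (hΩ.mem_nhds hp)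
  obtain ⟨r, hr, hrρ⟩ : ∃ r : ℝ, 0 < r ∧ 4 * r = ρ := ⟨ρ / 4, by positivity, by ring⟩
  have hda : ∀ y ∈ closedBall p ρ, DifferentiableAt ℂ f y := fun y hy =>
    hf.differentiableAt (hΩ.mem_nhds (hρΩ hy))
  obtain ⟨M, hM⟩ := (isCompact_closedBall p ρ).exists_bound_of_continuousOn
    (hf.continuousOn.mono hρΩ)
  have hM0 : 0 ≤ M := (norm_nonneg _).trans (hM p (by simp [hρ.le]))
  set e : Fin n → ℂ := Pi.single i 1 with he
  have hen : ‖e‖ = 1 := by rw [he, Pi.norm_single, norm_one]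
  set γ : ℝ → ℂ := circleMap 0 r with hγ
  have hγn : ∀ θ, ‖γ θ‖ = r := fun θ => by simp [hγ, abs_of_pos hr]
  have hγc : Continuous γ := continuous_circleMap 0 r
  set k : ℝ → ℂ := fun θ => deriv (circleMap 0 r) θ * ((γ θ)^2)⁻¹ with hk
  have hγ0 : ∀ θ, γ θ ≠ 0 := fun θ h => by
    have := hγn θ; rw [h, norm_zero] at this; exact hr.ne this
  have hkc : Continuous k := by
    have : Continuous (deriv (circleMap 0 r)) := by
      rw [show deriv (circleMap 0 r) = fun θ => circleMap 0 r θ * Complex.I from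
        funext fun θ => by simp [deriv_circleMap]]
      fun_prop
    exact this.mul ((hγc.pow 2).inv₀ (fun θ => pow_ne_zero 2 (hγ0 θ)))
  have hkn : ∀ θ, ‖k θ‖ = r⁻¹ := fun θ => by
    simp only [hk, norm_mul, norm_inv, norm_pow, hγn, deriv_circleMap, Complex.norm_I, mul_one]
    rw [← hγ, hγn]; field_simp
  have hmem : ∀ z ∈ ball p r, ∀ θ, closedBall (z + γ θ • e) r ⊆ closedBall p ρ := by
    intro z hz θ
    apply closedBall_subset_closedBall'
    rw [mem_ball] at hz
    have : dist (z + γ θ • e) p ≤ dist (z + γ θ • e) z + dist z p := dist_triangle _ _ _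
    rw [dist_self_add_left, norm_smul, hγn, hen] at this
    linarith
  have hmem' : ∀ z ∈ ball p r, ∀ θ, z + γ θ • e ∈ closedBall p ρ := fun z hz θ =>
    hmem z hz θ (by simp [hr.le])
  -- Cauchy formula
  have hform : ∀ z ∈ ball p r, pderivC i f z = (2 * Real.pi * Complex.I)⁻¹ •
      ∫ θ in Ioc 0 (2 * Real.pi), k θ * f (z + γ θ • e) := by
    intro z hz
    have hU : closedBall (0:ℂ) r ⊆ ball 0 (2 * r) := closedBall_subset_ball (by linarith)
    have hin : ∀ t ∈ ball (0:ℂ) (2 * r), z + t • e ∈ closedBall p ρ := by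
      intro t ht
      rw [mem_ball] at hz
      have : dist (z + t • e) p ≤ dist (z + t • e) z + dist z p := dist_triangle _ _ _
      rw [dist_self_add_left, norm_smul, hen] at this
      simp only [mem_ball, dist_zero_right, mem_closedBall] at ht ⊢
      linarith
    have hd : ∀ t ∈ ball (0:ℂ) (2 * r), HasDerivAt (fun t : ℂ => f (z + t • e))
        (fderiv ℂ f (z + t • e) e) t := by
      intro t ht
      have h1 : HasDerivAt (fun t : ℂ => z + t • e) e t := by
        simpa using ((hasDerivAt_id t).smul_const e).const_add z
      exact (hda _ (hin t ht)).hasFDerivAt.comp_hasDerivAt t h1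
    have h0 := hd 0 (by simp [hr])
    simp only [zero_smul, add_zero] at h0
    have := Complex.two_pi_I_inv_smul_circleIntegral_sub_sq_inv_smul_of_differentiable
      isOpen_ball hU (fun t ht => (hd t ht).differentiableAt.differentiableWithinAt)
      (mem_ball_self hr)
    rw [h0.deriv] at this
    rw [pderivC, ← he, ← this, circleIntegral,
      intervalIntegral.integral_of_le (by positivity)]
    congr 2
    ext θ
    simp [hk, hγ, mul_assoc]
  have hD : HasFDerivAt (fun z => ∫ θ in Ioc 0 (2 * Real.pi), k θ * f (z + γ θ • e))
      (∫ θ in Ioc 0 (2 * Real.pi), k θ • fderiv ℂ f (p + γ θ • e)) p := by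
    have hcont : ∀ z ∈ ball p r, Continuous fun θ => k θ * f (z + γ θ • e) := by
      intro z hz
      refine hkc.mul ?_
      exact hf.continuousOn.comp_continuous (by fun_prop) (fun θ => hρΩ (hmem' z hz θ))
    refine hasFDerivAt_integral_of_dominated_of_fderiv_le (s := ball p r)
      (F' := fun z θ => k θ • fderiv ℂ f (z + γ θ • e))
      (bound := fun _ => r⁻¹ * (M / r)) (ball_mem_nhds p hr) ?_ ?_ ?_ ?_ ?_ ?_
    · filter_upwards [ball_mem_nhds p hr] with z hz
      exact (hcont z hz).aestronglyMeasurable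
    · exact ((hcont p (mem_ball_self hr)).integrableOn_Icc).mono_set Ioc_subset_Icc_self
    · have h1 : Measurable fun θ => fderiv ℂ f (p + γ θ • e) :=
        (measurable_fderiv ℂ f).comp (by fun_prop : Continuous fun θ => p + γ θ • e).measurable
      exact (hkc.measurable.smul h1).aestronglyMeasurable
    · refine Eventually.of_forall fun θ z hz => ?_
      rw [norm_smul, hkn]
      gcongr
      exact norm_fderiv_le hr (fun y hy => hda y (hmem z hz θ hy)) (fun y hy => hM y (hmem z hz θ hy))
    · exact integrable_const _
    · refine Eventually.of_forall fun θ z hz => ?_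
      have h1 : HasFDerivAt (fun z => z + γ θ • e) (ContinuousLinearMap.id ℂ (Fin n → ℂ)) z :=
        (hasFDerivAt_id z).add_const _
      exact ((hda _ (hmem' z hz θ)).hasFDerivAt.comp z h1).const_mul (k θ)
  have := (hD.const_smul ((2 * Real.pi * Complex.I)⁻¹ : ℂ)).differentiableAt
  refine this.congr_of_eventuallyEq ?_
  filter_upwards [ball_mem_nhds p hr] with z hz
  exact hform z hz

/-- Iterated partial derivatives along a word. -/
noncomputable def D (l : List (Fin n)) (f : (Fin n → ℂ) → ℂ) : (Fin n → ℂ) → ℂ :=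
  l.foldr pderivC f

lemma D_differentiableOn {Ω : Set (Fin n → ℂ)} (hΩ : IsOpen Ω) {f : (Fin n → ℂ) → ℂ}
    (hf : DifferentiableOn ℂ f Ω) (l : List (Fin n)) : DifferentiableOn ℂ (D l f) Ω := by
  induction l with
  | nil => exact hf
  | cons i l ih => exact pderivC_differentiableOn hΩ i ih

lemma pderivC_congr {Ω : Set (Fin n → ℂ)} (hΩ : IsOpen Ω) (i : Fin n)
    {f g : (Fin n → ℂ) → ℂ} (h : EqOn f g Ω) : EqOn (pderivC i f) (pderivC i g) Ω := by
  intro z hz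
  have : f =ᶠ[𝓝 z] g := h.eventuallyEq_of_mem (hΩ.mem_nhds hz)
  simp only [pderivC, this.fderiv_eq]

lemma fderiv_eq_sum (f : (Fin n → ℂ) → ℂ) (z v : Fin n → ℂ) :
    fderiv ℂ f z v = ∑ i, v i * pderivC i f z := by
  conv_lhs => rw [pi_eq_sum_univ' v]
  simp only [map_sum, pderivC, map_smul, smul_eq_mul]

lemma pderivC_comm {Ω : Set (Fin n → ℂ)} (hΩ : IsOpen Ω) (i j : Fin n)
    {f : (Fin n → ℂ) → ℂ} (hf : DifferentiableOn ℂ f Ω) :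
    EqOn (pderivC i (pderivC j f)) (pderivC j (pderivC i f)) Ω := by
  intro z hz
  have hfe : fderiv ℂ f = fun y => ∑ i, pderivC i f y •
      (ContinuousLinearMap.proj (R := ℂ) (φ := fun _ : Fin n => ℂ) i) := by
    ext1 y
    ext1 v
    rw [fderiv_eq_sum]
    simp [mul_comm]
  have hd : DifferentiableAt ℂ (fderiv ℂ f) z := by
    rw [hfe]
    refine DifferentiableAt.fun_sum fun i _ => ?_
    exact ((pderivC_differentiableOn hΩ i hf).differentiableAt (hΩ.mem_nhds hz)).smul_const _
  have hs := second_derivative_symmetric_of_eventually (𝕜 := ℂ) (f := f) (f' := fderiv ℂ f)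
    (x := z) (f'' := fderiv ℂ (fderiv ℂ f) z)
    (by filter_upwards [hΩ.mem_nhds hz] with y hy
        exact (hf.differentiableAt (hΩ.mem_nhds hy)).hasFDerivAt) hd.hasFDerivAt
  have key : ∀ i j : Fin n, pderivC i (pderivC j f) z =
      fderiv ℂ (fderiv ℂ f) z (Pi.single i 1) (Pi.single j 1) := by
    intro i j
    have := (hd.hasFDerivAt.clm_apply (hasFDerivAt_const (Pi.single j (1:ℂ) : Fin n → ℂ) z)).fderiv
    change fderiv ℂ (fun y => fderiv ℂ f y (Pi.single j 1)) z (Pi.single i 1) = _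
    rw [this]
    simp
  rw [key, key, hs]

lemma D_perm {Ω : Set (Fin n → ℂ)} (hΩ : IsOpen Ω) {f : (Fin n → ℂ) → ℂ}
    (hf : DifferentiableOn ℂ f Ω) {l l' : List (Fin n)} (h : l.Perm l') :
    EqOn (D l f) (D l' f) Ω := by
  induction h with
  | nil => exact fun _ _ => rfl
  | cons i _ ih => exact pderivC_congr hΩ i ih
  | swap i j l => exact pderivC_comm hΩ j i (D_differentiableOn hΩ hf l)
  | trans _ _ h1 h2 => exact h1.trans h2

lemma D_append (l l' : List (Fin n)) (f : (Fin n → ℂ) → ℂ) : D (l ++ l') f = D l (D l' f) := by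
  simp [D]

lemma D_replicate (m : ℕ) (i : Fin n) (f : (Fin n → ℂ) → ℂ) :
    D (List.replicate m i) f = (pderivC i)^[m] f := by
  induction m with
  | zero => rfl
  | succ m ih => rw [List.replicate_succ, Function.iterate_succ_apply', ← ih]; rfl

lemma mpderiv_eq_D (α : Fin n → ℕ) (f : (Fin n → ℂ) → ℂ) :
    mpderiv α f = D ((List.finRange n).flatMap fun i => List.replicate (α i) i) f := by
  unfold mpderiv
  induction List.finRange n with
  | nil => rfl
  | cons i l ih =>
    rw [List.flatMap_cons, D_append, ← ih, D_replicate]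
    rfl

lemma D_eq_mpderiv {Ω : Set (Fin n → ℂ)} (hΩ : IsOpen Ω) {f : (Fin n → ℂ) → ℂ}
    (hf : DifferentiableOn ℂ f Ω) (l : List (Fin n)) :
    EqOn (D l f) (mpderiv (fun i => l.count i) f) Ω := by
  rw [mpderiv_eq_D]
  apply D_perm hΩ hf
  rw [List.perm_iff_count]
  intro i
  rw [List.count_flatMap]
  simp only [Function.comp_def, List.count_replicate]
  rw [← List.ofFn_eq_map, List.sum_ofFn]
  simp

/-- The `L²` norm on `Ω`. -/
noncomputable def nh (Ω : Set (Fin n → ℂ)) (h : (Fin n → ℂ) → ℂ) : ℝ :=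
  Real.sqrt (∫ z in Ω, ‖h z‖ ^ 2)

lemma nh_nonneg (Ω : Set (Fin n → ℂ)) (h : (Fin n → ℂ) → ℂ) : 0 ≤ nh Ω h := Real.sqrt_nonneg _

/-- The Bergman space. -/
def V (Ω : Set (Fin n → ℂ)) (h : (Fin n → ℂ) → ℂ) : Prop :=
  DifferentiableOn ℂ h Ω ∧ IntegrableOn (fun z => ‖h z‖ ^ 2) Ω volume

lemma rot_preserving (c : ℂ) (hc : ‖c‖ = 1) :
    MeasurePreserving (fun w : Fin n → ℂ => c • w) volume volume := by
  have h1 : MeasurePreserving (fun w : ℂ => c * w) volume volume := by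
    have := (rotation (⟨c, by simp [Submonoid.unitSphere, hc]⟩ : Circle)).measurePreserving
    exact this
  exact volume_preserving_pi (fun _ : Fin n => h1)

lemma mean_value {f : (Fin n → ℂ) → ℂ} {z : Fin n → ℂ} {s : ℝ}
    (hf : ∀ y ∈ closedBall z s, DifferentiableAt ℂ f y) :
    ∫ w in closedBall 0 s, f (z + w) = (volume (closedBall (0 : Fin n → ℂ) s)).toReal • f z := by
  set B := closedBall (0 : Fin n → ℂ) s with hB
  set γ : ℝ → ℂ := circleMap 0 1 with hγ
  have hγc : Continuous γ := continuous_circleMap 0 1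
  have hγn : ∀ θ, ‖γ θ‖ = 1 := fun θ => by simp [hγ]
  have hmem : ∀ w ∈ B, ∀ t : ℂ, ‖t‖ ≤ 1 → z + t • w ∈ closedBall z s := by
    intro w hw t ht
    simp only [hB, mem_closedBall, dist_zero_right, dist_self_add_left, norm_smul] at hw ⊢
    nlinarith [norm_nonneg t, norm_nonneg w]
  have hfc : ContinuousOn f (closedBall z s) := fun y hy => (hf y hy).continuousAt.continuousWithinAt
  have hcirc : ∀ w ∈ B, ∫ θ in Ioc 0 (2 * Real.pi), f (z + γ θ • w) = (2 * Real.pi) • f z := by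
    intro w hw
    have hd : DiffContOnCl ℂ (fun t : ℂ => f (z + t • w)) (ball 0 |1|) := by
      apply DifferentiableOn.diffContOnCl
      rw [abs_one, closure_ball _ one_ne_zero]
      intro t ht
      apply DifferentiableAt.differentiableWithinAt
      have h1 : DifferentiableAt ℂ (fun t : ℂ => z + t • w) t := by fun_prop
      exact (hf _ (hmem w hw t (by simpa using ht))).comp t h1
    have := hd.circleAverage
    rw [Real.circleAverage_def, intervalIntegral.integral_of_le (by positivity)] at this
    simp only [zero_smul, add_zero] at this
    rw [← this, smul_smul, mul_inv_cancel₀ (by positivity), one_smul]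
  have hrot : ∀ θ, ∫ w in B, f (z + γ θ • w) = ∫ w in B, f (z + w) := by
    intro θ
    have hpre : (fun w : Fin n → ℂ => γ θ • w) ⁻¹' B = B := by
      ext w; simp [hB, norm_smul, hγn]
    have hemb : MeasurableEmbedding (fun w : Fin n → ℂ => γ θ • w) :=
      measurableEmbedding_const_smul₀ (fun h => by
        have := hγn θ; rw [h, norm_zero] at this; exact zero_ne_one this)
    have := (rot_preserving (n := n) (γ θ) (hγn θ)).setIntegral_preimage_emb hemb
      (fun w => f (z + w)) B
    rwa [hpre] at this
  have hint : Integrable (Function.uncurry fun (θ : ℝ) (w : Fin n → ℂ) => f (z + γ θ • w))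
      ((volume.restrict (Ioc 0 (2 * Real.pi))).prod (volume.restrict B)) := by
    rw [Measure.prod_restrict]
    refine IntegrableOn.mono_set (t := Icc 0 (2 * Real.pi) ×ˢ B) ?_
      (prod_mono_left Ioc_subset_Icc_self)
    apply ContinuousOn.integrableOn_compact
    · exact isCompact_Icc.prod (isCompact_closedBall _ _)
    · refine hfc.comp (f := fun x : ℝ × (Fin n → ℂ) => z + γ x.1 • x.2) (by fun_prop) ?_
      rintro ⟨θ, w⟩ ⟨_, hw⟩
      exact hmem w hw _ (hγn θ).le
  have hswap := integral_integral_swap hint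
  have hL : ∫ θ in Ioc 0 (2 * Real.pi), ∫ w in B, f (z + γ θ • w) =
      (2 * Real.pi) • ∫ w in B, f (z + w) := by
    simp only [hrot]
    rw [setIntegral_const]
    simp [Real.pi_pos.le]
  have hR : ∫ w in B, ∫ θ in Ioc 0 (2 * Real.pi), f (z + γ θ • w) =
      (2 * Real.pi) • ((volume B).toReal • f z) := by
    rw [setIntegral_congr_fun measurableSet_closedBall (fun w hw => hcirc w hw), setIntegral_const,
      smul_comm]
    rfl
  rw [hL, hR] at hswap
  exact smul_right_injective ℂ (by positivity : (2 * Real.pi) ≠ 0) hswap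

lemma point_bound {Ω : Set (Fin n → ℂ)} (hΩ : IsOpen Ω) {s : ℝ} (hs : 0 < s) :
    ∃ C : ℝ, 0 ≤ C ∧ ∀ h, V Ω h → ∀ z, closedBall z s ⊆ Ω → ‖h z‖ ≤ C * nh Ω h := by
  set v := (volume (closedBall (0 : Fin n → ℂ) s)).toReal with hv
  have hv0 : 0 < v := ENNReal.toReal_pos (measure_closedBall_pos _ _ hs).ne'
    measure_closedBall_lt_top.ne
  refine ⟨Real.sqrt v⁻¹, by positivity, fun h ⟨hd, hi⟩ z hz => ?_⟩
  have hmv := mean_value (f := fun y => h y ^ 2) (z := z) (s := s)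
    (fun y hy => (hd.differentiableAt (hΩ.mem_nhds (hz hy))).pow 2)
  have htr : ∫ w in closedBall 0 s, ‖h (z + w)‖ ^ 2 = ∫ y in closedBall z s, ‖h y‖ ^ 2 := by
    have := (measurePreserving_add_left (volume : Measure (Fin n → ℂ)) z).setIntegral_preimage_emb
      (measurableEmbedding_addLeft z) (fun y => ‖h y‖ ^ 2) (closedBall z s)
    rw [← this]
    congr 2
    ext w
    simp
  have hle : v * ‖h z‖ ^ 2 ≤ ∫ z in Ω, ‖h z‖ ^ 2 := by
    calc v * ‖h z‖ ^ 2 = ‖v • h z ^ 2‖ := by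
          rw [norm_smul, norm_pow, Real.norm_of_nonneg hv0.le]
      _ = ‖∫ w in closedBall 0 s, h (z + w) ^ 2‖ := by rw [hmv]
      _ ≤ ∫ w in closedBall 0 s, ‖h (z + w) ^ 2‖ := norm_integral_le_integral_norm _
      _ = ∫ y in closedBall z s, ‖h y‖ ^ 2 := by simp only [norm_pow, htr]
      _ ≤ _ := setIntegral_mono_set hi (Eventually.of_forall fun y => by positivity)
          (LE.le.eventuallyLE hz)
  rw [nh, ← Real.sqrt_mul (by positivity)]
  apply Real.le_sqrt_of_sq_le
  rw [inv_mul_eq_div, le_div_iff₀ hv0]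
  linarith

lemma D_bound {Ω : Set (Fin n → ℂ)} (hΩ : IsOpen Ω) {p : Fin n → ℂ} {r : ℝ}
    (hr : ball p r ⊆ Ω) (l : List (Fin n)) : ∀ r' < r, ∃ C : ℝ, 0 ≤ C ∧
    ∀ h, V Ω h → ∀ z ∈ ball p r', ‖D l h z‖ ≤ C * nh Ω h := by
  induction l with
  | nil =>
    intro r' hr'
    obtain ⟨C, hC, H⟩ := point_bound hΩ (s := (r - r') / 2) (by linarith)
    refine ⟨C, hC, fun h hh z hz => H h hh z (Subset.trans ?_ hr)⟩
    intro y hy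
    rw [mem_ball] at *
    rw [mem_closedBall] at hy
    linarith [dist_triangle y z p]
  | cons i l ih =>
    intro r' hr'
    obtain ⟨C, hC, H⟩ := ih ((r + r') / 2) (by linarith)
    have hs : 0 < (r - r') / 4 := by linarith
    refine ⟨C / ((r - r') / 4), by positivity, fun h hh z hz => ?_⟩
    have hsub : closedBall z ((r - r') / 4) ⊆ ball p ((r + r') / 2) := by
      intro y hy
      rw [mem_ball] at *
      rw [mem_closedBall] at hy
      linarith [dist_triangle y z p]
    have := norm_fderiv_apply_le (f := D l h) (v := Pi.single i 1) hs
      (fun y hy => (D_differentiableOn hΩ hh.1 l).differentiableAt (hΩ.mem_nhds (hr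
        (ball_subset_ball (by linarith) (hsub hy)))))
      (fun y hy => H h hh y (hsub hy)) (by rw [Pi.norm_single, norm_one])
    rw [div_mul_eq_mul_div]
    exact this

/-- Iterated directional derivatives. -/
noncomputable def T (v : Fin n → ℂ) : ℕ → ((Fin n → ℂ) → ℂ) → (Fin n → ℂ) → ℂ
  | 0, f => f
  | k + 1, f => fun z => ∑ i, v i * T v k (pderivC i f) z

lemma iteratedDeriv_line {Ω : Set (Fin n → ℂ)} (hΩ : IsOpen Ω) (p v : Fin n → ℂ) (k : ℕ) :
    ∀ f : (Fin n → ℂ) → ℂ, DifferentiableOn ℂ f Ω → ∀ t : ℂ, p + t • v ∈ Ω →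
    iteratedDeriv k (fun t : ℂ => f (p + t • v)) t = T v k f (p + t • v) := by
  have hcl : Continuous fun t : ℂ => p + t • v := by fun_prop
  have hU : IsOpen {t : ℂ | p + t • v ∈ Ω} := hΩ.preimage hcl
  have hd : ∀ f : (Fin n → ℂ) → ℂ, DifferentiableOn ℂ f Ω → ∀ t : ℂ, p + t • v ∈ Ω →
      HasDerivAt (fun t : ℂ => f (p + t • v)) (fderiv ℂ f (p + t • v) v) t := by
    intro f hf t ht
    have h1 : HasDerivAt (fun t : ℂ => p + t • v) v t := by
      simpa using ((hasDerivAt_id t).smul_const v).const_add p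
    exact (hf.differentiableAt (hΩ.mem_nhds ht)).hasFDerivAt.comp_hasDerivAt t h1
  induction k with
  | zero => intro f hf t ht; simp [T]
  | succ k ih =>
    intro f hf t ht
    rw [iteratedDeriv_succ']
    have heq : deriv (fun t : ℂ => f (p + t • v)) =ᶠ[𝓝 t]
        fun t => ∑ i, v i * pderivC i f (p + t • v) := by
      filter_upwards [hU.mem_nhds ht] with u hu
      rw [(hd f hf u hu).deriv, fderiv_eq_sum]
    rw [heq.iteratedDeriv_eq, iteratedDeriv_fun_sum]
    · simp only [T]
      refine Finset.sum_congr rfl fun i _ => ?_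
      rw [iteratedDeriv_const_mul_field, ih _ (pderivC_differentiableOn hΩ i hf) t ht]
    · intro i _
      have : DifferentiableOn ℂ (fun t : ℂ => v i * pderivC i f (p + t • v))
          {t : ℂ | p + t • v ∈ Ω} := fun u hu =>
        ((hd _ (pderivC_differentiableOn hΩ i hf) u hu).differentiableAt.const_mul _).differentiableWithinAt
      exact (this.analyticAt (hU.mem_nhds ht)).contDiffAt

lemma taylor_bound {g : ℂ → ℂ} {M : ℝ} (hg : DifferentiableOn ℂ g (closedBall 0 2))
    (hM : ∀ t ∈ closedBall (0:ℂ) 2, ‖g t‖ ≤ M) (K : ℕ) :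
    ‖g 1 - ∑ k ∈ Finset.range K, (k.factorial : ℂ)⁻¹ * iteratedDeriv k g 0‖ ≤ 2 * (1 / 2) ^ K * M := by
  have hs := Complex.hasSum_taylorSeries_on_ball (hg.mono ball_subset_closedBall)
    (z := 1) (by simp)
  simp only [sub_zero, one_pow, one_mul, smul_eq_mul] at hs
  have hc : ∀ k, ‖(k.factorial : ℂ)⁻¹ * iteratedDeriv k g 0‖ ≤ M * (1 / 2) ^ k := by
    intro k
    have := Complex.norm_iteratedDeriv_le_of_forall_mem_sphere_norm_le k two_pos
      (DifferentiableOn.diffContOnCl (by rwa [closure_ball _ two_ne_zero]))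
      (fun t ht => hM t (sphere_subset_closedBall ht))
    rw [norm_mul, norm_inv, Complex.norm_natCast]
    have hk : (0:ℝ) < k.factorial := by positivity
    calc _ ≤ (k.factorial : ℝ)⁻¹ * (k.factorial * M / 2 ^ k) := by gcongr
      _ = _ := by rw [one_div, inv_pow]; field_simp
  have h2 := (hasSum_nat_add_iff' K).2 hs
  have hgeo : HasSum (fun k => M * (1 / 2 : ℝ) ^ (k + K)) (2 * (1 / 2) ^ K * M) := by
    have := (hasSum_geometric_two.mul_left (M * (1 / 2 : ℝ) ^ K))
    rw [show (fun k => M * (1 / 2 : ℝ) ^ (k + K)) = fun k => M * (1 / 2 : ℝ) ^ K * (1 / 2) ^ k from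
      funext fun k => by ring, show 2 * (1 / 2 : ℝ) ^ K * M = M * (1 / 2) ^ K * 2 by ring]
    exact this
  rw [← h2.tsum_eq]
  exact tsum_of_norm_bounded hgeo fun k => hc (k + K)

/-- The span of the derivative functionals at `a`. -/
noncomputable def A (a : Fin n → ℂ) : Submodule ℂ (((Fin n → ℂ) → ℂ) → ℂ) :=
  Submodule.span ℂ (range fun (α : Fin n → ℕ) (h : (Fin n → ℂ) → ℂ) => mpderiv α h a)

/-- A functional is approximable by derivative functionals at `a`. -/
def Approx (Ω : Set (Fin n → ℂ)) (a : Fin n → ℂ) (L : ((Fin n → ℂ) → ℂ) → ℂ) : Prop :=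
  ∀ ε > 0, ∃ L' ∈ A a, ∀ h, V Ω h → ‖L h - L' h‖ ≤ ε * nh Ω h

variable {Ω : Set (Fin n → ℂ)} {a : Fin n → ℂ}

lemma Approx.zero : Approx Ω a (fun _ => 0) := fun ε hε =>
  ⟨0, Submodule.zero_mem _, fun h _ => by simpa using mul_nonneg hε.le (nh_nonneg Ω h)⟩

lemma Approx.add {L M : ((Fin n → ℂ) → ℂ) → ℂ} (hL : Approx Ω a L) (hM : Approx Ω a M) :
    Approx Ω a (fun h => L h + M h) := by
  intro ε hε
  obtain ⟨L', hL', H⟩ := hL (ε / 2) (by positivity)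
  obtain ⟨M', hM', H'⟩ := hM (ε / 2) (by positivity)
  refine ⟨L' + M', Submodule.add_mem _ hL' hM', fun h hh => ?_⟩
  have h1 := H h hh
  have h2 := H' h hh
  have : L h + M h - (L' + M') h = (L h - L' h) + (M h - M' h) := by
    simp only [Pi.add_apply]; ring
  rw [this]
  linarith [norm_add_le (L h - L' h) (M h - M' h)]

lemma Approx.const_mul {L : ((Fin n → ℂ) → ℂ) → ℂ} (hL : Approx Ω a L) (c : ℂ) :
    Approx Ω a (fun h => c * L h) := by
  intro ε hε
  obtain ⟨L', hL', H⟩ := hL (ε / (‖c‖ + 1)) (by positivity)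
  refine ⟨c • L', Submodule.smul_mem _ _ hL', fun h hh => ?_⟩
  have h1 := H h hh
  have h0 := nh_nonneg Ω h
  rw [Pi.smul_apply, smul_eq_mul, ← mul_sub, norm_mul]
  calc ‖c‖ * ‖L h - L' h‖ ≤ (‖c‖ + 1) * (ε / (‖c‖ + 1) * nh Ω h) := by
        gcongr; linarith
    _ = ε * nh Ω h := by field_simp

lemma Approx.sum {ι : Type*} (s : Finset ι) {L : ι → ((Fin n → ℂ) → ℂ) → ℂ}
    (hL : ∀ i ∈ s, Approx Ω a (L i)) : Approx Ω a (fun h => ∑ i ∈ s, L i h) := by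
  classical
  induction s using Finset.induction_on with
  | empty => simpa using Approx.zero
  | insert i s hi ih =>
    simp only [Finset.sum_insert hi]
    exact (hL i (by simp)).add (ih fun j hj => hL j (by simp [hj]))

lemma Approx.limit {L : ((Fin n → ℂ) → ℂ) → ℂ}
    (hL : ∀ ε > 0, ∃ M, Approx Ω a M ∧ ∀ h, V Ω h → ‖L h - M h‖ ≤ ε * nh Ω h) : Approx Ω a L := by
  intro ε hε
  obtain ⟨M, hM, H⟩ := hL (ε / 2) (by positivity)
  obtain ⟨M', hM', H'⟩ := hM (ε / 2) (by positivity)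
  refine ⟨M', hM', fun h hh => ?_⟩
  have h1 := H h hh
  have h2 := H' h hh
  have h3 := norm_sub_le_norm_sub_add_norm_sub (L h) (M h) (M' h)
  linarith only [h1, h2, h3]

/-- All derivative functionals at `p` are approximable. -/
def P (Ω : Set (Fin n → ℂ)) (a p : Fin n → ℂ) : Prop :=
  ∀ l : List (Fin n), Approx Ω a (fun h => D l h p)

lemma P_self (hΩ : IsOpen Ω) (ha : a ∈ Ω) : P Ω a a := by
  intro l ε hε
  refine ⟨_, Submodule.subset_span ⟨fun i => l.count i, rfl⟩, fun h hh => ?_⟩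
  beta_reduce
  rw [D_eq_mpderiv hΩ hh.1 l ha]
  simpa using mul_nonneg hε.le (nh_nonneg Ω h)

lemma P_T {p : Fin n → ℂ} (hp : P Ω a p) (v : Fin n → ℂ) (k : ℕ) :
    ∀ l : List (Fin n), Approx Ω a (fun h => T v k (D l h) p) := by
  induction k with
  | zero => exact hp
  | succ k ih =>
    intro l
    exact Approx.sum _ fun i _ => (ih (i :: l)).const_mul (v i)

lemma P_step (hΩ : IsOpen Ω) {p₀ p z : Fin n → ℂ} {r : ℝ} (hr : ball p₀ r ⊆ Ω)
    (hp : p ∈ ball p₀ (r / 8)) (hz : z ∈ ball p₀ (r / 8)) (hP : P Ω a p) : P Ω a z := by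
  intro l
  apply Approx.limit
  intro ε hε
  rw [mem_ball] at hp hz
  have hr0 : 0 < r := by linarith [dist_nonneg (x := p) (y := p₀)]
  obtain ⟨C, hC, H⟩ := D_bound hΩ hr l (3 * r / 4) (by linarith)
  have hmem : ∀ t ∈ closedBall (0:ℂ) 2, p + t • (z - p) ∈ ball p₀ (3 * r / 4) := by
    intro t ht
    rw [mem_closedBall, dist_zero_right] at ht
    have h1 : dist (p + t • (z - p)) p₀ ≤ dist (p + t • (z - p)) p + dist p p₀ :=
      dist_triangle _ _ _
    rw [dist_self_add_left, norm_smul, ← dist_eq_norm] at h1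
    have h2 : dist z p ≤ dist z p₀ + dist p p₀ := dist_triangle_right _ _ _
    rw [mem_ball]
    nlinarith [norm_nonneg t, dist_nonneg (x := z) (y := p)]
  have hmemΩ : ∀ t ∈ closedBall (0:ℂ) 2, p + t • (z - p) ∈ Ω := fun t ht =>
    hr (ball_subset_ball (by linarith) (hmem t ht))
  obtain ⟨K, hK⟩ := exists_pow_lt_of_lt_one (show 0 < ε / (2 * (C + 1)) by positivity)
    (show (1 / 2 : ℝ) < 1 by norm_num)
  refine ⟨fun h => ∑ k ∈ Finset.range K, (k.factorial : ℂ)⁻¹ * T (z - p) k (D l h) p,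
    Approx.sum _ fun k _ => (P_T hP _ k l).const_mul _, fun h hh => ?_⟩
  have hd := D_differentiableOn hΩ hh.1 l
  have hg : DifferentiableOn ℂ (fun t : ℂ => D l h (p + t • (z - p))) (closedBall 0 2) :=
    hd.comp (f := fun t : ℂ => p + t • (z - p)) (by fun_prop) hmemΩ
  have hT := taylor_bound hg (M := C * nh Ω h) (fun t ht => H h hh _ (hmem t ht)) K
  have h0 := nh_nonneg Ω h
  have hid : ∀ k, iteratedDeriv k (fun t : ℂ => D l h (p + t • (z - p))) 0 =
      T (z - p) k (D l h) p := by
    intro k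
    rw [iteratedDeriv_line hΩ p (z - p) k _ hd 0 (hmemΩ 0 (by simp))]
    simp
  simp only [hid, one_smul, add_sub_cancel] at hT
  refine hT.trans ?_
  have hKC : 2 * (1 / 2 : ℝ) ^ K * C ≤ ε := by
    rw [lt_div_iff₀ (by positivity)] at hK
    nlinarith [pow_pos (show (0:ℝ) < 1 / 2 by norm_num) K]
  calc _ = 2 * (1 / 2 : ℝ) ^ K * C * nh Ω h := by ring
    _ ≤ _ := by gcongr

lemma approx_all (hΩ : IsOpen Ω) (hc : IsConnected Ω) {b : Fin n → ℂ} (ha : a ∈ Ω) (hb : b ∈ Ω) :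
    Approx Ω a (fun h => h b) := by
  have hloc : ∀ p₀ ∈ Ω, ∃ r > 0, ball p₀ r ⊆ Ω := fun p₀ hp₀ => Metric.isOpen_iff.1 hΩ p₀ hp₀
  set S : Set (Fin n → ℂ) := {p | p ∈ Ω ∧ P Ω a p} with hS
  have hsub : Ω ⊆ S := by
    refine hc.isPreconnected.subset_of_closure_inter_subset ?_ ⟨a, ha, ha, P_self hΩ ha⟩ ?_
    · rw [Metric.isOpen_iff]
      rintro p ⟨hp, hP⟩
      obtain ⟨r, hr, hrΩ⟩ := hloc p hp
      exact ⟨r / 8, by positivity, fun z hz => ⟨hrΩ (ball_subset_ball (by linarith) hz),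
        P_step hΩ hrΩ (mem_ball_self (by positivity)) hz hP⟩⟩
    · rintro p ⟨hp, hpΩ⟩
      obtain ⟨r, hr, hrΩ⟩ := hloc p hpΩ
      obtain ⟨q, ⟨_, hq⟩, hqp⟩ := Metric.mem_closure_iff.1 hp (r / 8) (by positivity)
      exact ⟨hpΩ, P_step hΩ hrΩ (by rwa [mem_ball']) (mem_ball_self (by positivity)) hq⟩
  exact (hsub hb).2 []

end NQ

/-- Approximate null quadrature identity in several complex variables: on a
bounded domain `Ω ⊆ ℂⁿ` with `a, b ∈ Ω`, for every `ε > 0` there are `N` and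
complex constants `c_α` (`|α| ≤ N`) such that every square-integrable holomorphic
`h` on `Ω` satisfies `|h(b) − Σ_{|α|≤N} c_α ∂^α h(a)| ≤ ε ‖h‖_{L²(Ω)}`. -/
theorem approximate_null_quadrature_several_variables
    (n : ℕ) (hn : 0 < n)
    (Ω : Set (Fin n → ℂ)) (hΩopen : IsOpen Ω) (hΩconn : IsConnected Ω)
    (hΩbdd : Bornology.IsBounded Ω)
    (a b : Fin n → ℂ) (ha : a ∈ Ω) (hb : b ∈ Ω)
    (ε : ℝ) (hε : 0 < ε) :
    ∃ N : ℕ, 0 < N ∧ ∃ c : (Fin n → ℕ) → ℂ,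
      ∀ h : (Fin n → ℂ) → ℂ, DifferentiableOn ℂ h Ω →
        IntegrableOn (fun z => ‖h z‖ ^ 2) Ω volume →
        ‖h b - ∑ α ∈ (Fintype.piFinset fun _ : Fin n => Finset.range (N + 1)).filter
              (fun α => ∑ i, α i ≤ N),
            c α * mpderiv α h a‖
          ≤ ε * Real.sqrt (∫ z in Ω, ‖h z‖ ^ 2) := by
  classical
  obtain ⟨L', hL', H⟩ := NQ.approx_all hΩopen hΩconn ha hb ε hε
  obtain ⟨c, rfl⟩ := Finsupp.mem_span_range_iff_exists_finsupp.1 hL'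
  refine ⟨c.support.sup (fun α => ∑ i, α i) + 1, Nat.succ_pos _, c, fun h hd hi => ?_⟩
  have := H h ⟨hd, hi⟩
  rw [Finsupp.sum_of_support_subset (s := (Fintype.piFinset fun _ : Fin n =>
    Finset.range (c.support.sup (fun α => ∑ i, α i) + 1 + 1)).filter
      (fun α => ∑ i, α i ≤ c.support.sup (fun α => ∑ i, α i) + 1)) c ?_ _ (by simp)] at this
  · simpa only [NQ.nh, Finset.sum_apply, Pi.smul_apply, smul_eq_mul] using this
  · intro α hα
    have h1 : ∑ i, α i ≤ c.support.sup (fun α => ∑ i, α i) :=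
      Finset.le_sup (f := fun α : Fin n → ℕ => ∑ i, α i) hα
    simp only [Finset.mem_filter, Fintype.mem_piFinset, Finset.mem_range]
    refine ⟨fun i => ?_, by omega⟩
    have h2 : α i ≤ ∑ i, α i := Finset.single_le_sum (fun _ _ => Nat.zero_le _) (Finset.mem_univ i)
    omega
end

section
/- Let Ω be a bounded domain in ℂⁿ and let a, b be distinct points of Ω. Then for every M > 0 and ε > 0 there exist a positive integer N and real coefficients c_β, indexed by multi-indices β ∈ ℕ^{2n} with |β| ≤ N (derivatives with respect to the 2n real coordinates of ℂⁿ ≅ ℝ^{2n}), such that for every pluriharmonic function u : Ω → ℝ with |u(z)| < M for all z ∈ Ω, |u(b) − Σ_{|β| ≤ N} c_β (∂^β u)(a)| < ε. The integer N and the coefficients c_β depend on Ω, a, b, ε, M but not on u. -/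
open MeasureTheory Finset

/-- Real directional (partial) derivative of `u : ℂⁿ → ℝ` in the direction `v`. -/
noncomputable def rpderiv {n : ℕ} (v : Fin n → ℂ) (u : (Fin n → ℂ) → ℝ) :
    (Fin n → ℂ) → ℝ :=
  fun z => fderiv ℝ u z v

/-- Multi-index real partial derivative of `u : ℂⁿ → ℝ` with respect to the `2n`
real coordinates of `ℂⁿ ≅ ℝ^{2n}`: the multi-index `β : Fin n → ℕ × ℕ` records the
number of `xᵢ`-derivatives and `yᵢ`-derivatives in the `i`-th complex coordinate
`zᵢ = xᵢ + i yᵢ`. -/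
noncomputable def mpderivR {n : ℕ} (β : Fin n → ℕ × ℕ) :
    ((Fin n → ℂ) → ℝ) → ((Fin n → ℂ) → ℝ) :=
  ((List.finRange n).map fun i =>
      (rpderiv (Pi.single i 1))^[(β i).1] ∘
        (rpderiv (Pi.single i Complex.I))^[(β i).2]).foldr (· ∘ ·) id

/-- `u` is pluriharmonic on `Ω ⊆ ℂⁿ`: every point of `Ω` has an open neighborhood
contained in `Ω` on which `u` is the real part of a holomorphic function. -/
def PluriharmonicOn {n : ℕ} (u : (Fin n → ℂ) → ℝ) (Ω : Set (Fin n → ℂ)) : Prop :=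
  ∀ z ∈ Ω, ∃ V : Set (Fin n → ℂ), IsOpen V ∧ z ∈ V ∧ V ⊆ Ω ∧
    ∃ f : (Fin n → ℂ) → ℂ, DifferentiableOn ℂ f V ∧ ∀ w ∈ V, (f w).re = u w

open Metric Topology Filter in
lemma rs_hol_dir {n : ℕ} {f : (Fin n → ℂ) → ℂ} {V : Set (Fin n → ℂ)} (hV : IsOpen V)
    (hf : DifferentiableOn ℂ f V) (v : Fin n → ℂ) :
    DifferentiableOn ℂ (fun w => fderiv ℂ f w v) V := by
  intro z hz
  apply DifferentiableAt.differentiableWithinAt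
  have hcont : ContinuousAt f z := (hf.differentiableAt (hV.mem_nhds hz)).continuousAt
  obtain ⟨S, hS, hS'⟩ := Metric.mem_nhds_iff.1
    (Filter.inter_mem (hV.mem_nhds hz) (hcont.preimage_mem_nhds (ball_mem_nhds (f z) one_pos)))
  obtain ⟨R, hR, rfl⟩ : ∃ R : ℝ, 0 < R ∧ S = 3 * R := ⟨S / 3, by positivity, by ring⟩
  have hdb : DifferentiableOn ℂ f (ball z (3 * R)) := hf.mono fun x hx => (hS' hx).1
  have hbd : ∀ c ∈ ball z (2 * R), ‖fderiv ℂ f c‖ ≤ 2 / R := by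
    intro c hc
    have hsub : ball c R ⊆ ball z (3 * R) := by
      apply ball_subset_ball'
      have := mem_ball.1 hc
      linarith
    apply Complex.norm_fderiv_le_div_of_mapsTo_ball (hdb.mono hsub) _ hR
    intro x hx
    have h1 : dist (f x) (f z) < 1 := (hS' (hsub hx)).2
    have h2 : dist (f c) (f z) < 1 := (hS' (hsub (mem_ball_self hR))).2
    rw [mem_closedBall]
    have := dist_triangle_right (f x) (f c) (f z)
    linarith
  set r : ℝ := R / (‖v‖ + 1) with hr
  have hr0 : 0 < r := by positivity
  have hrv : r * ‖v‖ < R := by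
    rw [hr, div_mul_eq_mul_div, div_lt_iff₀ (by positivity)]
    nlinarith
  have hmem : ∀ w ∈ ball z R, ∀ ζ : ℂ, ‖ζ‖ ≤ r → w + ζ • v ∈ ball z (2 * R) := by
    intro w hw ζ hζ
    rw [mem_ball] at hw ⊢
    have h1 : dist (w + ζ • v) w = ‖ζ‖ * ‖v‖ := by simp [dist_eq_norm, norm_smul]
    have h2 : ‖ζ‖ * ‖v‖ ≤ r * ‖v‖ := by gcongr
    have := dist_triangle (w + ζ • v) w z
    linarith
  have h23 : ball z (2 * R) ⊆ ball z (3 * R) := ball_subset_ball (by linarith)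
  have hat : ∀ c ∈ ball z (2 * R), DifferentiableAt ℂ f c := fun c hc =>
    hdb.differentiableAt (isOpen_ball.mem_nhds (h23 hc))
  have key : ∀ w ∈ ball z R, fderiv ℂ f w v =
      (2 * Real.pi * Complex.I : ℂ)⁻¹ • ∮ ζ in C(0, r), ((ζ - 0) ^ 2)⁻¹ • f (w + ζ • v) := by
    intro w hw
    have hc : Continuous fun ζ : ℂ => w + ζ • v := by fun_prop
    rw [Complex.two_pi_I_inv_smul_circleIntegral_sub_sq_inv_smul_of_differentiable
      (U := (fun ζ : ℂ => w + ζ • v) ⁻¹' ball z (2 * R)) (isOpen_ball.preimage hc)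
      (f := fun ζ : ℂ => f (w + ζ • v)) (fun ζ hζ => hmem w hw ζ (by simpa using hζ)) _
      (mem_ball_self hr0)]
    · have hd : HasDerivAt (fun ζ : ℂ => w + ζ • v) v 0 := by
        simpa using ((hasDerivAt_id (0 : ℂ)).smul_const v).const_add w
      have hf0 : HasFDerivAt f (fderiv ℂ f w) (w + (0 : ℂ) • v) := by
        have := (hat _ (hmem w hw 0 (by simpa using hr0.le))).hasFDerivAt
        simpa using this
      exact (hf0.comp_hasDerivAt (0 : ℂ) hd).deriv.symm
    · intro ζ hζ
      apply DifferentiableAt.differentiableWithinAt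
      exact (hat _ hζ).comp ζ (f := fun ζ : ℂ => w + ζ • v) (by fun_prop)
  have hev : (fun w => fderiv ℂ f w v) =ᶠ[𝓝 z] fun w =>
      (2 * Real.pi * Complex.I : ℂ)⁻¹ • ∮ ζ in C(0, r), ((ζ - 0) ^ 2)⁻¹ • f (w + ζ • v) := by
    filter_upwards [ball_mem_nhds z hR] with w hw using key w hw
  refine DifferentiableAt.congr_of_eventuallyEq ?_ hev
  apply DifferentiableAt.fun_const_smul
  unfold circleIntegral
  have hcm : ∀ θ, ‖circleMap 0 r θ‖ ≤ r := fun θ => by simp [abs_of_pos hr0]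
  have hne : ∀ θ, circleMap 0 r θ ≠ 0 := fun θ => by simp [circleMap, hr0.ne']
  have hcc : ∀ w ∈ ball z R, Continuous fun θ : ℝ => f (w + circleMap 0 r θ • v) := by
    intro w hw
    rw [continuous_iff_continuousAt]
    intro θ
    have h1 : ContinuousAt f (w + circleMap 0 r θ • v) :=
      (hat _ (hmem w hw _ (hcm θ))).continuousAt
    have h2 : ContinuousAt (fun θ : ℝ => w + circleMap 0 r θ • v) θ := by
      have := continuous_circleMap 0 r
      fun_prop
    exact ContinuousAt.comp (f := fun θ : ℝ => w + circleMap 0 r θ • v) h1 h2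
  set k : ℝ → ℂ := fun θ => deriv (circleMap 0 r) θ * ((circleMap 0 r θ - 0) ^ 2)⁻¹ with hk
  have hkc : Continuous k := by
    have h1 : Continuous (circleMap 0 r) := continuous_circleMap 0 r
    have h2 : Continuous fun θ => ((circleMap 0 r θ - 0) ^ 2)⁻¹ :=
      Continuous.inv₀ (by fun_prop) (fun θ => by simpa using hne θ)
    simp only [hk, deriv_circleMap]
    fun_prop
  have hmeas : Measurable (fderiv ℂ f) := measurable_fderiv ℂ f
  have := intervalIntegral.hasFDerivAt_integral_of_dominated_of_fderiv_le (𝕜 := ℂ)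
    (μ := volume) (a := 0) (b := 2 * Real.pi) (s := ball z R) (x₀ := z)
    (F := fun w θ => deriv (circleMap 0 r) θ •
      (((circleMap 0 r θ - 0) ^ 2)⁻¹ • f (w + circleMap 0 r θ • v)))
    (F' := fun w θ => k θ • fderiv ℂ f (w + circleMap 0 r θ • v))
    (bound := fun θ => ‖k θ‖ * (2 / R)) (ball_mem_nhds z hR)
    (by
      filter_upwards [ball_mem_nhds z hR] with w hw
      have : Continuous fun θ => k θ * f (w + circleMap 0 r θ • v) := hkc.mul (hcc w hw)
      refine Continuous.aestronglyMeasurable ?_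
      simpa [hk, mul_assoc] using this)
    (by
      have : Continuous fun θ => k θ * f (z + circleMap 0 r θ • v) :=
        hkc.mul (hcc z (mem_ball_self hR))
      refine Continuous.intervalIntegrable ?_ _ _
      simpa [hk, mul_assoc] using this)
    (by
      apply Measurable.aestronglyMeasurable
      have h1 : Measurable fun θ : ℝ => z + circleMap 0 r θ • v := by
        have := continuous_circleMap 0 r
        exact Continuous.measurable (by fun_prop)
      exact hkc.measurable.smul (hmeas.comp h1))
    (by
      refine Filter.Eventually.of_forall fun θ _ w hw => ?_
      rw [norm_smul]
      gcongr
      exact hbd _ (hmem w hw _ (hcm θ)))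
    (by
      apply Continuous.intervalIntegrable
      fun_prop)
    (by
      refine Filter.Eventually.of_forall fun θ _ w hw => ?_
      have h1 := (hat _ (hmem w hw _ (hcm θ))).hasFDerivAt
      have h2 : HasFDerivAt (fun w : Fin n → ℂ => f (w + circleMap 0 r θ • v))
          (fderiv ℂ f (w + circleMap 0 r θ • v)) w := by
        have := h1.comp w (f := fun w : Fin n → ℂ => w + circleMap 0 r θ • v)
          ((hasFDerivAt_id w).add_const _)
        simpa using! this
      have h3 := h2.const_smul (k θ)
      simpa only [hk, smul_smul] using! h3)
  exact this.differentiableAt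

lemma rs_hasFDerivAt {n : ℕ} {u : (Fin n → ℂ) → ℝ} {V : Set (Fin n → ℂ)} (hV : IsOpen V)
    {f : (Fin n → ℂ) → ℂ} (hf : DifferentiableOn ℂ f V) (hfu : ∀ w ∈ V, (f w).re = u w)
    {w : Fin n → ℂ} (hw : w ∈ V) :
    HasFDerivAt u (Complex.reCLM.comp ((fderiv ℂ f w).restrictScalars ℝ)) w := by
  have h1 : HasFDerivAt f ((fderiv ℂ f w).restrictScalars ℝ) w :=
    (hf.differentiableAt (hV.mem_nhds hw)).hasFDerivAt.restrictScalars ℝ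
  have h2 := Complex.reCLM.hasFDerivAt.comp w h1
  refine h2.congr_of_eventuallyEq ?_
  filter_upwards [hV.mem_nhds hw] with x hx
  simp [hfu x hx]

lemma rs_rpderiv_eq {n : ℕ} {u : (Fin n → ℂ) → ℝ} {V : Set (Fin n → ℂ)} (hV : IsOpen V)
    {f : (Fin n → ℂ) → ℂ} (hf : DifferentiableOn ℂ f V) (hfu : ∀ w ∈ V, (f w).re = u w)
    (v : Fin n → ℂ) {w : Fin n → ℂ} (hw : w ∈ V) :
    rpderiv v u w = (fderiv ℂ f w v).re := by
  unfold rpderiv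
  rw [(rs_hasFDerivAt hV hf hfu hw).fderiv]
  simp

lemma rs_diffAt {n : ℕ} {u : (Fin n → ℂ) → ℝ} {Ω : Set (Fin n → ℂ)} (hu : PluriharmonicOn u Ω)
    {z : Fin n → ℂ} (hz : z ∈ Ω) : DifferentiableAt ℝ u z := by
  obtain ⟨V, hV, hzV, -, f, hf, hfu⟩ := hu z hz
  exact (rs_hasFDerivAt hV hf hfu hzV).differentiableAt

lemma rs_plh_rpderiv {n : ℕ} {u : (Fin n → ℂ) → ℝ} {Ω : Set (Fin n → ℂ)}
    (hu : PluriharmonicOn u Ω) (v : Fin n → ℂ) : PluriharmonicOn (rpderiv v u) Ω := by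
  intro z hz
  obtain ⟨V, hV, hzV, hVΩ, f, hf, hfu⟩ := hu z hz
  exact ⟨V, hV, hzV, hVΩ, fun w => fderiv ℂ f w v, rs_hol_dir hV hf v,
    fun w hw => (rs_rpderiv_eq hV hf hfu v hw).symm⟩

lemma rs_diff_fderiv {n : ℕ} {f : (Fin n → ℂ) → ℂ} {V : Set (Fin n → ℂ)} (hV : IsOpen V)
    (hf : DifferentiableOn ℂ f V) {z : Fin n → ℂ} (hz : z ∈ V) :
    DifferentiableAt ℂ (fderiv ℂ f) z := by
  have h : fderiv ℂ f = fun y => ∑ i : Fin n,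
      (ContinuousLinearMap.proj (R := ℂ) (φ := fun _ : Fin n => ℂ) i).smulRight
        (fderiv ℂ f y (Pi.single i 1)) := by
    funext y
    apply ContinuousLinearMap.ext
    intro v
    conv_lhs => rw [pi_eq_sum_univ' v]
    simp
  rw [h]
  refine DifferentiableAt.fun_sum fun i _ => ?_
  have h1 : DifferentiableAt ℂ (fun y => fderiv ℂ f y (Pi.single i 1)) z :=
    (rs_hol_dir hV hf _).differentiableAt (hV.mem_nhds hz)
  exact ((ContinuousLinearMap.smulRightL ℂ (Fin n → ℂ) ℂ
    (ContinuousLinearMap.proj (R := ℂ) (φ := fun _ : Fin n => ℂ) i)).differentiableAt).comp z h1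

lemma rs_comm {n : ℕ} {u : (Fin n → ℂ) → ℝ} {Ω : Set (Fin n → ℂ)}
    (hu : PluriharmonicOn u Ω) (v w : Fin n → ℂ) {z : Fin n → ℂ} (hz : z ∈ Ω) :
    rpderiv v (rpderiv w u) z = rpderiv w (rpderiv v u) z := by
  obtain ⟨V, hV, hzV, hVΩ, f, hf, hfu⟩ := hu z hz
  rw [rs_rpderiv_eq hV (rs_hol_dir hV hf w) (fun x hx => (rs_rpderiv_eq hV hf hfu w hx).symm) v hzV,
    rs_rpderiv_eq hV (rs_hol_dir hV hf v) (fun x hx => (rs_rpderiv_eq hV hf hfu v hx).symm) w hzV]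
  have hd := (rs_diff_fderiv hV hf hzV).hasFDerivAt
  have key : ∀ v w : Fin n → ℂ, fderiv ℂ (fun y => fderiv ℂ f y w) z v =
      fderiv ℂ (fderiv ℂ f) z v w := by
    intro v w
    have := hd.clm_apply (hasFDerivAt_const w z)
    rw [this.fderiv]
    simp
  rw [key, key]
  congr 1
  refine second_derivative_symmetric_of_eventually (f := f) ?_ hd v w
  filter_upwards [hV.mem_nhds hzV] with y hy
  exact (hf.differentiableAt (hV.mem_nhds hy)).hasFDerivAt

/-- Iterated directional derivative along a list of directions. -/
noncomputable def rsD {n : ℕ} (l : List (Fin n → ℂ)) (u : (Fin n → ℂ) → ℝ) : (Fin n → ℂ) → ℝ :=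
  l.foldr rpderiv u

lemma rs_plh_rsD {n : ℕ} {u : (Fin n → ℂ) → ℝ} {Ω : Set (Fin n → ℂ)}
    (hu : PluriharmonicOn u Ω) (l : List (Fin n → ℂ)) : PluriharmonicOn (rsD l u) Ω := by
  induction l with
  | nil => exact hu
  | cons v l ih => exact rs_plh_rpderiv ih v

lemma rs_rpderiv_congr {n : ℕ} {u u' : (Fin n → ℂ) → ℝ} {Ω : Set (Fin n → ℂ)} (hΩ : IsOpen Ω)
    (h : Set.EqOn u u' Ω) (v : Fin n → ℂ) : Set.EqOn (rpderiv v u) (rpderiv v u') Ω := by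
  intro z hz
  unfold rpderiv
  rw [Filter.EventuallyEq.fderiv_eq (h.eventuallyEq_of_mem (hΩ.mem_nhds hz))]

lemma rs_perm {n : ℕ} {u : (Fin n → ℂ) → ℝ} {Ω : Set (Fin n → ℂ)} (hΩ : IsOpen Ω)
    (hu : PluriharmonicOn u Ω) {l l' : List (Fin n → ℂ)} (h : l.Perm l') :
    Set.EqOn (rsD l u) (rsD l' u) Ω := by
  induction h with
  | nil => exact fun _ _ => rfl
  | cons x _ ih => exact rs_rpderiv_congr hΩ ih x
  | swap x y l => exact fun z hz => rs_comm (rs_plh_rsD hu l) y x hz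
  | trans _ _ h1 h2 => exact h1.trans h2

open Metric in
lemma rs_disc {g : ℂ → ℝ} {C : ℝ} (hC : 0 < C)
    (hg : InnerProductSpace.HarmonicOnNhd g (ball 0 4)) (hb : ∀ t ∈ ball (0 : ℂ) 4, |g t| ≤ C) :
    ∃ F : ℂ → ℂ, DifferentiableOn ℂ F (ball 0 4) ∧ (∀ t ∈ ball (0 : ℂ) 4, (F t).re = g t) ∧
      ∀ k : ℕ, ‖iteratedDeriv k F 0‖ ≤ k.factorial * (5 * C) / 2 ^ k := by
  obtain ⟨F, hF, hFg⟩ := hg.exists_analyticOnNhd_ball_re_eq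
  have h0 : (0 : ℂ) ∈ ball (0 : ℂ) 4 := mem_ball_self (by norm_num)
  set G : ℂ → ℂ := fun t => F t - ((F 0).im : ℂ) * Complex.I with hG
  have hGd : DifferentiableOn ℂ G (ball 0 4) := hF.differentiableOn.sub_const _
  have hGre : ∀ t ∈ ball (0 : ℂ) 4, (G t).re = g t := by
    intro t ht
    have : (F t).re = g t := hFg ht
    simp [hG, this]
  refine ⟨G, hGd, hGre, fun k => ?_⟩
  have hG0 : ‖G 0‖ ≤ C := by
    have : G 0 = ((g 0 : ℝ) : ℂ) := by
      apply Complex.ext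
      · simpa using hGre 0 h0
      · simp [hG]
    rw [this, Complex.norm_real]
    exact hb 0 h0
  apply Complex.norm_iteratedDeriv_le_of_forall_mem_sphere_norm_le k (by norm_num)
  · exact hGd.diffContOnCl_ball (closedBall_subset_ball (by norm_num))
  · intro z hz
    have hz2 : ‖z‖ = 2 := by simpa using hz
    have := Complex.borelCaratheodory hC hGd (fun t ht => by
      have := (abs_le.1 (hb t ht)).2
      simpa [hGre t ht] using this) (by norm_num) (z := z) (by simp [hz2]; norm_num)
    rw [hz2] at this
    linarith

lemma rs_plh_iter {n : ℕ} {u : (Fin n → ℂ) → ℝ} {Ω : Set (Fin n → ℂ)}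
    (hu : PluriharmonicOn u Ω) (h : Fin n → ℂ) (k : ℕ) :
    PluriharmonicOn ((rpderiv h)^[k] u) Ω := by
  induction k with
  | zero => exact hu
  | succ k ih =>
    rw [Function.iterate_succ_apply']
    exact rs_plh_rpderiv ih h

open Metric Filter Topology in
lemma rs_line {n : ℕ} {u : (Fin n → ℂ) → ℝ} {Ω : Set (Fin n → ℂ)}
    (hu : PluriharmonicOn u Ω) {z h : Fin n → ℂ} {R C : ℝ} (hR : 0 < R) (hC : 0 < C)
    (hsub : ball z R ⊆ Ω) (hb : ∀ w ∈ ball z R, |u w| ≤ C) (hh : 4 * ‖h‖ ≤ R) :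
    ∃ F : ℂ → ℂ, DifferentiableOn ℂ F (ball 0 4) ∧
      (∀ k : ℕ, ∀ t ∈ ball (0 : ℂ) 4,
        (rpderiv h)^[k] u (z + t • h) = (iteratedDeriv k F t).re) ∧
      ∀ k : ℕ, ‖iteratedDeriv k F 0‖ ≤ k.factorial * (5 * C) / 2 ^ k := by
  have hmem : ∀ t ∈ ball (0 : ℂ) 4, z + t • h ∈ ball z R := by
    intro t ht
    have ht' : ‖t‖ < 4 := by simpa using ht
    have h1 : dist (z + t • h) z = ‖t‖ * ‖h‖ := by simp [dist_eq_norm, norm_smul]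
    rw [mem_ball, h1]
    rcases (norm_nonneg h).eq_or_lt with h0 | h0
    · rw [← h0]; simpa using hR
    · nlinarith
  have hlc : Continuous fun t : ℂ => z + t • h := by fun_prop
  have hharm : InnerProductSpace.HarmonicOnNhd (fun t : ℂ => u (z + t • h)) (ball 0 4) := by
    intro t ht
    obtain ⟨V, hV, hzV, hVΩ, f, hf, hfu⟩ := hu _ (hsub (hmem t ht))
    have hop : IsOpen ((fun t : ℂ => z + t • h) ⁻¹' V) := hV.preimage hlc
    have han : AnalyticAt ℂ (fun t : ℂ => f (z + t • h)) t := by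
      apply DifferentiableOn.analyticAt (s := (fun t : ℂ => z + t • h) ⁻¹' V) _ (hop.mem_nhds hzV)
      intro s hs
      apply DifferentiableAt.differentiableWithinAt
      exact (hf.differentiableAt (hV.mem_nhds hs)).comp s (f := fun t : ℂ => z + t • h)
        (by fun_prop)
    refine (InnerProductSpace.harmonicAt_congr_nhds ?_).1 han.harmonicAt_re
    filter_upwards [hop.mem_nhds hzV] with s hs using hfu _ hs
  obtain ⟨F, hF, hFu, hFb⟩ := rs_disc hC hharm fun t ht => hb _ (hmem t ht)
  refine ⟨F, hF, ?_, hFb⟩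
  intro k
  induction k with
  | zero => intro t ht; simpa using (hFu t ht).symm
  | succ k ih =>
    intro t ht
    rw [Function.iterate_succ_apply']
    have hd1 : HasDerivAt (fun s : ℝ => z + (t + (s : ℂ)) • h) h 0 := by
      have h1 : HasDerivAt (fun s : ℝ => t + (s : ℂ)) 1 0 :=
        (Complex.ofRealCLM.hasDerivAt (x := (0 : ℝ))).const_add t
      simpa using (h1.smul_const h).const_add z
    have hd2 : HasFDerivAt ((rpderiv h)^[k] u) (fderiv ℝ ((rpderiv h)^[k] u) (z + t • h))
        (z + (t + ((0 : ℝ) : ℂ)) • h) := by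
      have := (rs_diffAt (rs_plh_iter hu h k) (hsub (hmem t ht))).hasFDerivAt
      simpa using this
    have hd3 := hd2.comp_hasDerivAt (0 : ℝ) hd1
    have han : AnalyticAt ℂ (iteratedDeriv k F) t := by
      rw [iteratedDeriv_eq_iterate]
      exact (hF.analyticAt (isOpen_ball.mem_nhds ht)).iterated_deriv k
    have hd4 : HasDerivAt (iteratedDeriv k F) (iteratedDeriv (k + 1) F t) (t + ((0 : ℝ) : ℂ)) := by
      rw [iteratedDeriv_succ]
      simpa using han.differentiableAt.hasDerivAt
    have hd5 : HasDerivAt (fun s : ℝ => iteratedDeriv k F (t + (s : ℂ)))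
        (iteratedDeriv (k + 1) F t) 0 := by
      have h1 : HasDerivAt (fun s : ℝ => t + (s : ℂ)) 1 0 :=
        (Complex.ofRealCLM.hasDerivAt (x := (0 : ℝ))).const_add t
      have := hd4.comp (0 : ℝ) h1
      simpa using! this
    have hd6 : HasDerivAt (fun s : ℝ => (iteratedDeriv k F (t + (s : ℂ))).re)
        (iteratedDeriv (k + 1) F t).re 0 := by
      have := Complex.reCLM.hasFDerivAt.comp_hasDerivAt (0 : ℝ) hd5
      simpa using! this
    have hev : (fun s : ℝ => (iteratedDeriv k F (t + (s : ℂ))).re) =ᶠ[𝓝 0]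
        ((rpderiv h)^[k] u) ∘ (fun s : ℝ => z + (t + (s : ℂ)) • h) := by
      have hc : Continuous fun s : ℝ => t + (s : ℂ) := by fun_prop
      have : (fun s : ℝ => t + (s : ℂ)) ⁻¹' ball 0 4 ∈ 𝓝 (0 : ℝ) :=
        (isOpen_ball.preimage hc).mem_nhds (by simpa using ht)
      filter_upwards [this] with s hs
      exact (ih _ hs).symm
    exact (hd3.congr_of_eventuallyEq hev).unique hd6

open Metric Filter Topology in
lemma rs_taylor {n : ℕ} {u : (Fin n → ℂ) → ℝ} {Ω : Set (Fin n → ℂ)}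
    (hu : PluriharmonicOn u Ω) {z h : Fin n → ℂ} {R C : ℝ} (hR : 0 < R) (hC : 0 < C)
    (hsub : ball z R ⊆ Ω) (hb : ∀ w ∈ ball z R, |u w| ≤ C) (hh : 4 * ‖h‖ ≤ R) (N : ℕ) :
    |u (z + h) - ∑ k ∈ Finset.range N, (k.factorial : ℝ)⁻¹ * (rpderiv h)^[k] u z| ≤
      10 * C * (1 / 2) ^ N := by
  obtain ⟨F, hF, hFu, hFb⟩ := rs_line hu hR hC hsub hb hh
  have h1 : (1 : ℂ) ∈ ball (0 : ℂ) 4 := by simp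
  have h0 : (0 : ℂ) ∈ ball (0 : ℂ) 4 := by simp
  have hs := Complex.hasSum_taylorSeries_on_ball hF h1
  have hs2 := Complex.hasSum_re hs
  have e1 : (F 1).re = u (z + h) := by
    have := hFu 0 1 h1
    simpa using this.symm
  have e2 : ∀ k : ℕ, ((k.factorial : ℂ)⁻¹ • ((1 : ℂ) - 0) ^ k • iteratedDeriv k F 0).re =
      (k.factorial : ℝ)⁻¹ * (rpderiv h)^[k] u z := by
    intro k
    have := hFu k 0 h0
    rw [zero_smul, add_zero] at this
    rw [this]
    have : ((k.factorial : ℂ)⁻¹) = (((k.factorial : ℝ)⁻¹ : ℝ) : ℂ) := by push_cast; rfl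
    rw [this]
    simp
  rw [e1] at hs2
  simp only [e2] at hs2
  have hbd : ∀ k : ℕ, ‖(k.factorial : ℝ)⁻¹ * (rpderiv h)^[k] u z‖ ≤ 5 * C * (1 / 2) ^ k := by
    intro k
    have e := hFu k 0 h0
    rw [zero_smul, add_zero] at e
    rw [e, norm_mul, norm_inv, Real.norm_natCast]
    have h2 : ‖(iteratedDeriv k F 0).re‖ ≤ k.factorial * (5 * C) / 2 ^ k :=
      (Complex.abs_re_le_norm _).trans (hFb k)
    have hf : (0 : ℝ) < k.factorial := by exact_mod_cast k.factorial_pos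
    calc _ ≤ (k.factorial : ℝ)⁻¹ * (k.factorial * (5 * C) / 2 ^ k) := by gcongr
      _ = 5 * C * (1 / 2) ^ k := by rw [one_div, inv_pow]; field_simp
  have := dist_le_of_le_geometric_of_tendsto (1 / 2 : ℝ) (5 * C) (by norm_num)
    (dist_partial_sum_le_of_le_geometric hbd) hs2.tendsto_sum_nat N
  rw [dist_comm, Real.dist_eq] at this
  refine this.trans (le_of_eq ?_)
  ring

open Metric Filter Topology in
lemma rs_grad {n : ℕ} {u : (Fin n → ℂ) → ℝ} {Ω : Set (Fin n → ℂ)}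
    (hu : PluriharmonicOn u Ω) {z v : Fin n → ℂ} {R C : ℝ} (hR : 0 < R) (hC : 0 < C)
    (hsub : ball z R ⊆ Ω) (hb : ∀ w ∈ ball z R, |u w| ≤ C) :
    |rpderiv v u z| ≤ 10 * C * (‖v‖ + 1) / R := by
  set d : ℝ := R / (4 * (‖v‖ + 1)) with hd
  have hd0 : 0 < d := by positivity
  have hh : 4 * ‖d • v‖ ≤ R := by
    rw [norm_smul, Real.norm_of_nonneg hd0.le, hd]
    have : 4 * (R / (4 * (‖v‖ + 1)) * ‖v‖) = R * (‖v‖ / (‖v‖ + 1)) := by field_simp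
    rw [this]
    have : ‖v‖ / (‖v‖ + 1) ≤ 1 := by rw [div_le_one (by positivity)]; linarith
    nlinarith
  obtain ⟨F, hF, hFu, hFb⟩ := rs_line hu hR hC hsub hb hh
  have e := hFu 1 0 (by simp)
  rw [zero_smul, add_zero, Function.iterate_one] at e
  have e2 : rpderiv (d • v) u z = d * rpderiv v u z := by
    unfold rpderiv
    simp
  have h2 : |(iteratedDeriv 1 F 0).re| ≤ (1 : ℕ).factorial * (5 * C) / 2 ^ 1 :=
    (Complex.abs_re_le_norm _).trans (hFb 1)
  rw [← e, e2, abs_mul, abs_of_pos hd0] at h2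
  have h3 : |rpderiv v u z| ≤ (5 * C / 2) / d := by
    rw [le_div_iff₀ hd0, mul_comm]
    simpa using h2
  refine h3.trans (le_of_eq ?_)
  rw [hd]
  field_simp
  norm_num

open Metric in
lemma rs_bound {n : ℕ} {Ω : Set (Fin n → ℂ)} {z : Fin n → ℂ} {R M : ℝ} (hM : 0 < M)
    (hsub : ball z R ⊆ Ω) (l : List (Fin n → ℂ)) :
    ∀ r < R, ∃ C : ℝ, 0 < C ∧ ∀ u : (Fin n → ℂ) → ℝ, PluriharmonicOn u Ω →
      (∀ w ∈ Ω, |u w| < M) → ∀ w ∈ ball z r, |rsD l u w| ≤ C := by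
  induction l with
  | nil =>
    intro r hr
    exact ⟨M, hM, fun u _ hb w hw => (hb w (hsub (ball_subset_ball hr.le hw))).le⟩
  | cons v l ih =>
    intro r hr
    obtain ⟨C, hC, hCb⟩ := ih ((r + R) / 2) (by linarith)
    refine ⟨10 * C * (‖v‖ + 1) / ((R - r) / 2), ?_, ?_⟩
    · have : 0 < R - r := by linarith
      positivity
    · intro u hu hb w hw
      have hs : ball w ((R - r) / 2) ⊆ ball z ((r + R) / 2) := by
        apply ball_subset_ball'
        have := mem_ball.1 hw
        linarith
      exact rs_grad (rs_plh_rsD hu l) (by linarith) hC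
        (hs.trans ((ball_subset_ball (by linarith)).trans hsub))
        fun x hx => hCb u hu hb x (hs hx)

lemma rs_rsD_append {n : ℕ} (l l' : List (Fin n → ℂ)) (u : (Fin n → ℂ) → ℝ) :
    rsD (l ++ l') u = rsD l (rsD l' u) := by
  simp [rsD, List.foldr_append]

lemma rs_rsD_replicate {n : ℕ} (k : ℕ) (v : Fin n → ℂ) (u : (Fin n → ℂ) → ℝ) :
    rsD (List.replicate k v) u = (rpderiv v)^[k] u := by
  induction k with
  | zero => rfl
  | succ k ih =>
    rw [List.replicate_succ, Function.iterate_succ_apply', ← ih]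
    rfl

/-- The real coordinate directions of `ℂⁿ`. -/
noncomputable def rsE {n : ℕ} (p : Fin n × Bool) : Fin n → ℂ :=
  Pi.single p.1 (if p.2 then Complex.I else 1)

/-- The list of coordinate indices attached to a multi-index. -/
def rsCanon {n : ℕ} (β : Fin n → ℕ × ℕ) (L : List (Fin n)) : List (Fin n × Bool) :=
  L.flatMap fun i => List.replicate (β i).1 (i, false) ++ List.replicate (β i).2 (i, true)

lemma rs_mpderivR_eq {n : ℕ} (β : Fin n → ℕ × ℕ) (u : (Fin n → ℂ) → ℝ) :
    mpderivR β u = rsD ((rsCanon β (List.finRange n)).map rsE) u := by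
  unfold mpderivR
  generalize List.finRange n = L
  induction L with
  | nil => rfl
  | cons i L ih =>
    have : rsCanon β (i :: L) = List.replicate (β i).1 (i, false) ++
      (List.replicate (β i).2 (i, true) ++ rsCanon β L) := by
      simp [rsCanon]
    rw [this, List.map_append, List.map_append, rs_rsD_append, rs_rsD_append, ← ih,
      List.map_replicate, List.map_replicate, rs_rsD_replicate, rs_rsD_replicate]
    simp [rsE]

lemma rs_perm_canon {n : ℕ} (l : List (Fin n × Bool)) :
    l.Perm (rsCanon (fun i => (l.count (i, false), l.count (i, true))) (List.finRange n)) := by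
  rw [List.perm_iff_count]
  rintro ⟨j, t⟩
  rw [rsCanon, List.count_flatMap]
  have : (List.map (List.count (j, t) ∘ fun i =>
      List.replicate (l.count (i, false)) (i, false) ++
        List.replicate (l.count (i, true)) (i, true)) (List.finRange n)).sum =
      ∑ i : Fin n, if i = j then l.count (j, t) else 0 := by
    rw [Fin.sum_univ_def]
    congr 1
    apply List.map_congr_left
    intro i _
    by_cases hij : i = j
    · subst hij
      cases t <;> simp [List.count_replicate]
    · simp [List.count_replicate, hij]
  rw [this]
  simp

/-- The class of bounded pluriharmonic functions. -/
abbrev RsX {n : ℕ} (Ω : Set (Fin n → ℂ)) (M : ℝ) : Type :=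
  {u : (Fin n → ℂ) → ℝ // PluriharmonicOn u Ω ∧ ∀ z ∈ Ω, |u z| < M}

/-- Linear combinations of derivatives at `a`. -/
noncomputable def rsA {n : ℕ} (Ω : Set (Fin n → ℂ)) (M : ℝ) (a : Fin n → ℂ) :
    Submodule ℝ (RsX Ω M → ℝ) :=
  Submodule.span ℝ (Set.range fun (β : Fin n → ℕ × ℕ) (u : RsX Ω M) => mpderivR β u.1 a)

lemma rs_expand {n : ℕ} (v : Fin n → ℂ) (u : (Fin n → ℂ) → ℝ) (z : Fin n → ℂ) :
    rpderiv v u z = ∑ i : Fin n, ((v i).re * rpderiv (rsE (i, false)) u z +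
      (v i).im * rpderiv (rsE (i, true)) u z) := by
  unfold rpderiv
  have : v = ∑ i : Fin n, ((v i).re • rsE (i, false) + (v i).im • rsE (i, true)) := by
    funext j
    rw [Finset.sum_apply, Finset.sum_eq_single j]
    · apply Complex.ext <;> simp [rsE]
    · intro i _ hij
      simp [rsE, Pi.single_eq_of_ne hij.symm]
    · simp
  conv_lhs => rw [this]
  simp

lemma rs_base {n : ℕ} {Ω : Set (Fin n → ℂ)} (hΩ : IsOpen Ω) (M : ℝ) {a : Fin n → ℂ} (ha : a ∈ Ω)
    (l : List (Fin n → ℂ)) : ∀ l' : List (Fin n × Bool),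
      (fun u : RsX Ω M => rsD (l ++ l'.map rsE) u.1 a) ∈ rsA Ω M a := by
  induction l with
  | nil =>
    intro l'
    apply Submodule.subset_span
    refine ⟨fun i => (l'.count (i, false), l'.count (i, true)), ?_⟩
    funext u
    rw [List.nil_append, rs_perm hΩ u.2.1 ((rs_perm_canon l').map rsE) ha, ← rs_mpderivR_eq]
  | cons v l ih =>
    intro l'
    have h1 : ∀ p : Fin n × Bool,
        (fun u : RsX Ω M => rpderiv (rsE p) (rsD (l ++ l'.map rsE) u.1) a) ∈ rsA Ω M a := by
      intro p
      convert ih (p :: l') using 1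
      funext u
      have hp : (rsE p :: (l ++ l'.map rsE)).Perm (l ++ (p :: l').map rsE) := by
        rw [List.map_cons]
        exact List.perm_middle.symm
      exact rs_perm hΩ u.2.1 hp ha
    have h2 : (fun u : RsX Ω M => rsD (v :: l ++ l'.map rsE) u.1 a) =
        ∑ i : Fin n, ((v i).re • (fun u : RsX Ω M =>
            rpderiv (rsE (i, false)) (rsD (l ++ l'.map rsE) u.1) a) +
          (v i).im • (fun u : RsX Ω M =>
            rpderiv (rsE (i, true)) (rsD (l ++ l'.map rsE) u.1) a)) := by
      funext u
      rw [Finset.sum_apply]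
      exact rs_expand v _ a
    rw [h2]
    exact Submodule.sum_mem _ fun i _ => Submodule.add_mem _
      (Submodule.smul_mem _ _ (h1 _)) (Submodule.smul_mem _ _ (h1 _))

/-- Functionals uniformly approximable by combinations of derivatives at `a`. -/
def RsApprox {n : ℕ} (Ω : Set (Fin n → ℂ)) (M : ℝ) (a : Fin n → ℂ) (T : RsX Ω M → ℝ) : Prop :=
  ∀ ε > 0, ∃ g ∈ rsA Ω M a, ∀ u, |T u - g u| < ε

lemma rs_approx_sum {n : ℕ} {Ω : Set (Fin n → ℂ)} {M : ℝ} {a : Fin n → ℂ}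
    (c : ℕ → ℝ) (T : ℕ → RsX Ω M → ℝ) (hT : ∀ k, RsApprox Ω M a (T k)) (N : ℕ) :
    RsApprox Ω M a (fun u => ∑ k ∈ Finset.range N, c k * T k u) := by
  induction N with
  | zero => exact fun ε hε => ⟨0, Submodule.zero_mem _, fun u => by simpa using hε⟩
  | succ N ih =>
    intro ε hε
    obtain ⟨g, hg, hg'⟩ := ih (ε / 2) (by positivity)
    obtain ⟨k, hk, hk'⟩ := hT N (ε / 2 / (|c N| + 1)) (by positivity)
    refine ⟨g + c N • k, Submodule.add_mem _ hg (Submodule.smul_mem _ _ hk), fun u => ?_⟩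
    simp only [Finset.sum_range_succ]
    have h1 := hg' u
    have h2 := hk' u
    rw [lt_div_iff₀ (by positivity)] at h2
    have h3 : |c N * (T N u - k u)| < ε / 2 := by
      rw [abs_mul]
      nlinarith [abs_nonneg (T N u - k u), abs_nonneg (c N)]
    have e : ∑ k ∈ Finset.range N, c k * T k u + c N * T N u - (g + c N • k) u =
        (∑ k ∈ Finset.range N, c k * T k u - g u) + c N * (T N u - k u) := by
      simp; ring
    rw [e]
    have := abs_add_le (∑ k ∈ Finset.range N, c k * T k u - g u) (c N * (T N u - k u))
    linarith

/-- Points at which all derivatives are approximable. -/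
def rsS {n : ℕ} (Ω : Set (Fin n → ℂ)) (M : ℝ) (a : Fin n → ℂ) : Set (Fin n → ℂ) :=
  {z | z ∈ Ω ∧ ∀ l : List (Fin n → ℂ), RsApprox Ω M a (fun u => rsD l u.1 z)}

open Metric in
lemma rs_step {n : ℕ} {Ω : Set (Fin n → ℂ)} {M R : ℝ} (hM : 0 < M) {a z : Fin n → ℂ}
    (hz : z ∈ rsS Ω M a) (hR : 0 < R) (hsub : ball z R ⊆ Ω) : ball z (R / 8) ⊆ rsS Ω M a := by
  intro x hx
  refine ⟨hsub (ball_subset_ball (by linarith) hx), fun l ε hε => ?_⟩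
  obtain ⟨h, rfl⟩ : ∃ h, x = z + h := ⟨x - z, by simp⟩
  have hh : 4 * ‖h‖ ≤ R / 2 := by
    have : ‖h‖ < R / 8 := by simpa [dist_eq_norm] using hx
    linarith
  obtain ⟨C, hC, hCb⟩ := rs_bound (z := z) hM hsub l (R / 2) (by linarith)
  obtain ⟨N, hN⟩ := exists_pow_lt_of_lt_one (show 0 < ε / 2 / (10 * C) by positivity)
    (show (1 / 2 : ℝ) < 1 by norm_num)
  rw [lt_div_iff₀ (by positivity), mul_comm] at hN
  obtain ⟨g, hg, hg'⟩ := rs_approx_sum (fun k => (k.factorial : ℝ)⁻¹)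
    (fun k (u : RsX Ω M) => rsD (List.replicate k h ++ l) u.1 z) (fun k => hz.2 _) N
    (ε / 2) (by positivity)
  refine ⟨g, hg, fun u => ?_⟩
  have h1 := rs_taylor (rs_plh_rsD u.2.1 l) (z := z) (h := h) (show 0 < R / 2 by linarith) hC
    ((ball_subset_ball (by linarith)).trans hsub) (hCb u.1 u.2.1 u.2.2) hh N
  have h2 := hg' u
  simp only [rs_rsD_append, rs_rsD_replicate] at h2
  have := abs_sub_le (rsD l u.1 (z + h)) (∑ k ∈ Finset.range N, (k.factorial : ℝ)⁻¹ *
    (rpderiv h)^[k] (rsD l u.1) z) (g u)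
  linarith

open Metric in
lemma rs_all {n : ℕ} {Ω : Set (Fin n → ℂ)} (hΩ : IsOpen Ω) (hc : IsPreconnected Ω) {M : ℝ}
    (hM : 0 < M) {a : Fin n → ℂ} (ha : a ∈ Ω) : Ω ⊆ rsS Ω M a := by
  apply hc.subset_of_closure_inter_subset
  · rw [Metric.isOpen_iff]
    intro z hz
    obtain ⟨R, hR, hsub⟩ := Metric.isOpen_iff.1 hΩ z hz.1
    exact ⟨R / 8, by positivity, rs_step hM hz hR hsub⟩
  · refine ⟨a, ha, ha, fun l ε hε => ⟨_, rs_base hΩ M ha l [], fun u => ?_⟩⟩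
    simpa using hε
  · rintro x ⟨hx, hxΩ⟩
    obtain ⟨R, hR, hsub⟩ := Metric.isOpen_iff.1 hΩ x hxΩ
    obtain ⟨z, hz, hxz⟩ := Metric.mem_closure_iff.1 hx (R / 16) (by positivity)
    have hs : ball z (R / 2) ⊆ Ω := by
      refine (ball_subset_ball' ?_).trans hsub
      rw [dist_comm]
      linarith
    apply rs_step hM hz (by positivity) hs
    rw [mem_ball]
    linarith


/-- Remote sensing for pluriharmonic functions: on a bounded domain `Ω ⊆ ℂⁿ` with
distinct points `a, b ∈ Ω`, for every `M > 0` and `ε > 0` there are `N` and real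
coefficients `c_β` (`|β| ≤ N`), independent of `u`, such that every pluriharmonic
`u` on `Ω` bounded by `M` satisfies `|u(b) − Σ_{|β|≤N} c_β ∂^β u(a)| < ε`. -/
theorem pluriharmonic_remote_sensing
    (n : ℕ) (hn : 0 < n)
    (Ω : Set (Fin n → ℂ)) (hΩopen : IsOpen Ω) (hΩconn : IsConnected Ω)
    (hΩbdd : Bornology.IsBounded Ω)
    (a b : Fin n → ℂ) (ha : a ∈ Ω) (hb : b ∈ Ω) (hab : a ≠ b)
    (M ε : ℝ) (hM : 0 < M) (hε : 0 < ε) :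
    ∃ N : ℕ, 0 < N ∧ ∃ c : (Fin n → ℕ × ℕ) → ℝ,
      ∀ u : (Fin n → ℂ) → ℝ, PluriharmonicOn u Ω → (∀ z ∈ Ω, |u z| < M) →
        |u b - ∑ β ∈ (Fintype.piFinset fun _ : Fin n =>
              Finset.range (N + 1) ×ˢ Finset.range (N + 1)).filter
              (fun β => ∑ i, ((β i).1 + (β i).2) ≤ N),
            c β * mpderivR β u a| < ε := by
  obtain ⟨g, hg, hg'⟩ := (rs_all hΩopen hΩconn.isPreconnected hM ha hb).2 [] ε hε
  obtain ⟨c, hc⟩ := (Finsupp.mem_span_range_iff_exists_finsupp).1 hg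
  set N : ℕ := (c.support.sup fun β => ∑ i, ((β i).1 + (β i).2)) + 1 with hN
  refine ⟨N, Nat.succ_pos _, c, fun u hu hub => ?_⟩
  have h1 := hg' ⟨u, hu, hub⟩
  rw [← hc, Finsupp.sum, Finset.sum_apply] at h1
  have h2 : c.support ⊆ (Fintype.piFinset fun _ : Fin n =>
      Finset.range (N + 1) ×ˢ Finset.range (N + 1)).filter
        (fun β => ∑ i, ((β i).1 + (β i).2) ≤ N) := by
    intro β hβ
    have hle : ∑ i, ((β i).1 + (β i).2) ≤ N := by
      have := Finset.le_sup (f := fun β : Fin n → ℕ × ℕ => ∑ i, ((β i).1 + (β i).2)) hβ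
      exact this.trans (Nat.le_succ _)
    rw [Finset.mem_filter, Fintype.mem_piFinset]
    refine ⟨fun i => ?_, hle⟩
    have := Finset.single_le_sum (f := fun i => (β i).1 + (β i).2) (fun _ _ => Nat.zero_le _)
      (Finset.mem_univ i)
    rw [Finset.mem_product, Finset.mem_range, Finset.mem_range]
    omega
  rw [← Finset.sum_subset h2 (fun β _ hβ => by
    rw [Finsupp.notMem_support_iff.1 hβ, zero_mul])]
  exact h1
end

section
/- Let Ω be a bounded domain in ℂ, let a ∈ Ω, and let c ∈ ℂ. Suppose Ω is a one-point quadrature domain for holomorphic functions: for every holomorphic function h on Ω that is integrable with respect to Lebesgue area measure, ∫_Ω h dA = c · h(a). Then Ω is a one-point quadrature domain for harmonic functions: for every harmonic function u : Ω → ℝ that is integrable with respect to Lebesgue area measure, ∫_Ω u dA = c · u(a) (in particular c is real, equal to the area of Ω). -/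
open MeasureTheory

/-- Directional (partial) derivative of a real-valued function on `ℂ ≅ ℝ²`
in the direction `v`; `pderivAlong 1` is `∂/∂x` and `pderivAlong I` is `∂/∂y`. -/
noncomputable def pderivAlong (v : ℂ) (u : ℂ → ℝ) : ℂ → ℝ :=
  fun z => fderiv ℝ u z v

/-- `u` is harmonic on `Ω`: twice continuously differentiable (over `ℝ`) on `Ω`
and satisfying `u_xx + u_yy = 0` there. -/
def HarmonicOnSet (u : ℂ → ℝ) (Ω : Set ℂ) : Prop :=
  ContDiffOn ℝ 2 u Ω ∧
    ∀ z ∈ Ω, pderivAlong 1 (pderivAlong 1 u) z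
      + pderivAlong Complex.I (pderivAlong Complex.I u) z = 0

lemma qd_disc_mean (G : ℂ → ℂ) (r s : ℝ) (hsr : s < r)
    (hG : DifferentiableOn ℂ G (Metric.ball 0 r)) :
    ∫ z in Metric.closedBall (0:ℂ) s, G z
      = (volume.real (Metric.closedBall (0:ℂ) s) : ℂ) * G 0 := by
  set K := Metric.closedBall (0:ℂ) s with hK
  have hKc : IsCompact K := isCompact_closedBall 0 s
  have hrot : ∀ θ : ℝ, ∫ z in K, G (circleMap 0 1 θ * z) = ∫ z in K, G z := by
    intro θ
    have h1 := (rotation (Circle.exp θ)).measurePreserving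
    have h2 := h1.setIntegral_preimage_emb
      (rotation (Circle.exp θ)).toHomeomorph.measurableEmbedding G K
    rw [← h2]
    have : (rotation (Circle.exp θ)) ⁻¹' K = K := by
      ext z; simp [hK, rotation_apply, -LinearIsometryEquiv.preimage_closedBall]
    rw [this]
    simp [circleMap, rotation_apply]
  have hmean : ∀ z ∈ K, ∫ θ in Set.Ioc 0 (2 * Real.pi), G (circleMap 0 1 θ * z)
      = (2 * Real.pi : ℂ) * G 0 := by
    intro z hz
    have hz' : ‖z‖ ≤ s := by simpa [hK] using hz
    have hd : DiffContOnCl ℂ (fun w => G (w * z)) (Metric.ball 0 |1|) := by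
      apply DifferentiableOn.diffContOnCl
      apply hG.comp (by fun_prop)
      intro w hw
      have : ‖w‖ ≤ 1 := by
        have := Metric.closure_ball_subset_closedBall hw
        simpa using this
      simp only [Metric.mem_ball, dist_zero_right, norm_mul]
      nlinarith [norm_nonneg w, norm_nonneg z]
    have := hd.circleAverage
    rw [Real.circleAverage_def, intervalIntegral.integral_of_le (by positivity)] at this
    simp only [zero_mul] at this
    rw [← this]
    simp only [Complex.real_smul]
    have hp : (Real.pi : ℂ) ≠ 0 := by exact_mod_cast Real.pi_ne_zero
    push_cast
    rw [mul_inv_cancel_left₀ (by simp [hp])]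
  have hint : Integrable (Function.uncurry fun (θ : ℝ) (z : ℂ) => G (circleMap 0 1 θ * z))
      ((volume.restrict (Set.Ioc 0 (2 * Real.pi))).prod (volume.restrict K)) := by
    rw [Measure.prod_restrict]
    have : IntegrableOn (Function.uncurry fun (θ : ℝ) (z : ℂ) => G (circleMap 0 1 θ * z))
      (Set.Icc 0 (2 * Real.pi) ×ˢ K) ((volume : Measure ℝ).prod (volume : Measure ℂ)) := by
      apply ContinuousOn.integrableOn_compact (isCompact_Icc.prod hKc)
      apply hG.continuousOn.comp (by fun_prop)
      rintro ⟨θ, z⟩ ⟨_, hz⟩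
      have : ‖z‖ ≤ s := by simpa [hK] using hz
      simp [circleMap]
      linarith
    exact this.mono_set (Set.prod_mono Set.Ioc_subset_Icc_self le_rfl)
  have hsw := integral_integral_swap hint
  rw [setIntegral_congr_fun hKc.measurableSet hmean] at hsw
  simp_rw [hrot] at hsw
  simp only [setIntegral_const, Complex.real_smul] at hsw
  have hp : (Real.pi : ℂ) ≠ 0 := by exact_mod_cast Real.pi_ne_zero
  have h2 : volume.real (Set.Ioc 0 (2 * Real.pi)) = 2 * Real.pi := by
    simp [Real.pi_pos.le]
  rw [h2] at hsw
  push_cast at hsw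
  have : (2 * Real.pi : ℂ) ≠ 0 := by simp [hp]
  apply mul_left_cancel₀ this
  rw [hsw]; ring

lemma qd_disc_mean_re (G : ℂ → ℂ) (a : ℂ) (r : ℝ)
    (hG : DifferentiableOn ℂ G (Metric.ball a r))
    (hi : IntegrableOn (fun z => (G z).re) (Metric.ball a r)) :
    ∫ z in Metric.ball a r, (G z).re
      = volume.real (Metric.ball a r) * (G a).re := by
  set S : ℕ → Set ℂ := fun n => Metric.closedBall a (r - 1 / ((n : ℝ) + 1)) with hS
  have hU : ⋃ n, S n = Metric.ball a r := by
    ext z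
    simp only [hS, Set.mem_iUnion, Metric.mem_closedBall, Metric.mem_ball]
    constructor
    · rintro ⟨n, hn⟩
      have : 0 < 1 / ((n : ℝ) + 1) := by positivity
      linarith
    · intro h
      obtain ⟨n, hn⟩ := exists_nat_one_div_lt (sub_pos.2 h)
      exact ⟨n, by linarith⟩
  have hm : Monotone S := by
    intro m n hmn
    apply Metric.closedBall_subset_closedBall
    have := Nat.one_div_le_one_div (α := ℝ) hmn
    linarith
  have hmeas : ∀ n, MeasurableSet (S n) := fun n => Metric.isClosed_closedBall.measurableSet
  have hn : ∀ n, ∫ z in S n, (G z).re = ∫ z in S n, (G a).re := by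
    intro n
    have hlt : r - 1 / ((n : ℝ) + 1) < r := by
      have : 0 < 1 / ((n : ℝ) + 1) := by positivity
      linarith
    have h1 := qd_disc_mean (fun z => G (a + z)) r _ hlt (by
      apply hG.comp (by fun_prop)
      intro z hz
      simpa using hz)
    have hpre : (fun z => a + z) ⁻¹' (S n) = Metric.closedBall 0 (r - 1 / ((n : ℝ) + 1)) := by
      ext z; simp [hS]
    have h2 := (measurePreserving_add_left (volume : Measure ℂ) a).setIntegral_preimage_emb
      (measurableEmbedding_addLeft a) G (S n)
    have h3 := (measurePreserving_add_left (volume : Measure ℂ) a).measure_preimage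
      (hmeas n).nullMeasurableSet
    rw [hpre] at h2 h3
    rw [h2, measureReal_def, h3, add_zero] at h1
    have hint : IntegrableOn G (S n) :=
      ContinuousOn.integrableOn_compact (isCompact_closedBall _ _)
        (hG.continuousOn.mono (Metric.closedBall_subset_ball hlt))
    have h4 := integral_re (𝕜 := ℂ) hint
    simp only [RCLike.re_eq_complex_re] at h4
    rw [h4, h1]
    simp [measureReal_def]
  have t1 := tendsto_setIntegral_of_monotone hmeas hm (hU ▸ hi)
  have hc : IntegrableOn (fun _ : ℂ => (G a).re) (⋃ n, S n) := by
    rw [hU]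
    exact integrableOn_const (by exact measure_ball_lt_top.ne)
  have t2 := tendsto_setIntegral_of_monotone hmeas hm hc
  simp_rw [hn] at t1
  have := tendsto_nhds_unique t1 t2
  rw [hU] at this
  rw [this]
  simp

lemma qd_harmonic (u : ℂ → ℝ) (Ω : Set ℂ) (ho : IsOpen Ω) (h : HarmonicOnSet u Ω) :
    InnerProductSpace.HarmonicOnNhd u Ω := by
  have hc : ∀ z ∈ Ω, ContDiffAt ℝ 2 u z := fun z hz => h.1.contDiffAt (ho.mem_nhds hz)
  intro z hz
  refine ⟨hc z hz, ?_⟩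
  filter_upwards [ho.mem_nhds hz] with w hw
  have hd : DifferentiableAt ℝ (fderiv ℝ u) w :=
    ((hc w hw).fderiv_right (m := 1) (by norm_num)).differentiableAt (by norm_num)
  have := h.2 w hw
  have e : ∀ v : ℂ, pderivAlong v (pderivAlong v u) w = fderiv ℝ (fderiv ℝ u) w v v := by
    intro v
    unfold pderivAlong
    rw [fderiv_clm_apply hd (by fun_prop)]
    simp
  rw [e, e] at this
  rw [InnerProductSpace.laplacian_eq_iteratedFDeriv_complexPlane]
  simpa [iteratedFDeriv_two_apply] using this

lemma qd_integrable_inv (w : ℂ) (Ω : Set ℂ) (hb : Bornology.IsBounded Ω) :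
    IntegrableOn (fun z : ℂ => (z - w)⁻¹) Ω := by
  have h0 : LocallyIntegrable (fun z : ℂ => z⁻¹) := by
    refine locallyIntegrable_of_norm_le_rpow (C := 1) (α := 1) (by simp) (by simp) ?_ ?_
    · filter_upwards with x
      simp [Real.rpow_neg_one]
    · exact measurable_inv.aestronglyMeasurable
  obtain ⟨R, hR⟩ := hb.subset_closedBall w
  have h1 := h0.integrableOn_isCompact (isCompact_closedBall 0 R)
  have h2 := ((measurePreserving_sub_right (volume : Measure ℂ) w).integrableOn_comp_preimage
    (measurableEmbedding_subRight w)).2 h1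
  refine h2.mono_set (hR.trans ?_)
  intro z hz
  simpa [dist_eq_norm] using hz

/-- A one-point quadrature domain for holomorphic functions is a one-point
quadrature domain for harmonic functions: if `∫_Ω h dA = c·h(a)` for every
integrable holomorphic `h` on the bounded domain `Ω`, then `∫_Ω u dA = c·u(a)` for
every integrable harmonic `u` on `Ω` (and `c` is real, equal to the area of `Ω`). -/
theorem one_point_quadrature_holomorphic_to_harmonic
    (Ω : Set ℂ) (hΩopen : IsOpen Ω) (hΩconn : IsConnected Ω)
    (hΩbdd : Bornology.IsBounded Ω)
    (a : ℂ) (ha : a ∈ Ω) (c : ℂ)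
    (hquad : ∀ h : ℂ → ℂ, DifferentiableOn ℂ h Ω → IntegrableOn h Ω volume →
      ∫ z in Ω, h z = c * h a) :
    (∀ u : ℂ → ℝ, HarmonicOnSet u Ω → IntegrableOn u Ω volume →
      ((∫ z in Ω, u z : ℝ) : ℂ) = c * (u a : ℂ))
    ∧ c = (((volume Ω).toReal : ℝ) : ℂ) := by
  have hfin : volume Ω ≠ ⊤ := hΩbdd.measure_lt_top.ne
  have hc : c = (((volume Ω).toReal : ℝ) : ℂ) := by
    have := hquad (fun _ => 1) (by fun_prop) (integrableOn_const hfin)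
    simp [measureReal_def] at this
    exact this.symm
  refine ⟨?_, hc⟩
  have hne : (Ωᶜ).Nonempty := by
    rw [Set.nonempty_compl]
    rintro rfl
    exact NormedSpace.unbounded_univ ℝ ℂ hΩbdd
  obtain ⟨w, hw, hrw⟩ := hΩopen.isClosed_compl.exists_infDist_eq_dist hne a
  set r := dist a w with hr
  have hsub : Metric.ball a r ⊆ Ω := by
    rw [← hrw]; exact Metric.ball_infDist_compl_subset
  have hrpos : 0 < r := by
    rw [hr, dist_pos]; rintro rfl; exact hw ha
  set h : ℂ → ℂ := fun z => 2 + 2 * (w - a) * (z - w)⁻¹ with hh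
  have hzw : ∀ z ∈ Ω, z - w ≠ 0 := by
    intro z hz h0
    rw [sub_eq_zero] at h0
    exact hw (h0 ▸ hz)
  have hdiff : DifferentiableOn ℂ h Ω := by
    intro z hz
    have := hzw z hz
    apply DifferentiableAt.differentiableWithinAt
    fun_prop (disch := assumption)
  have hint : IntegrableOn h Ω :=
    (integrableOn_const hfin).add ((qd_integrable_inv w Ω hΩbdd).const_mul _)
  have hha : h a = 0 := by
    have := hzw a ha
    simp only [hh]
    field_simp
    ring
  have hre : IntegrableOn (fun z => (h z).re) Ω := hint.re
  have e1 : ∫ z in Ω, (h z).re = 0 := by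
    have h4 := integral_re (𝕜 := ℂ) hint
    simp only [RCLike.re_eq_complex_re] at h4
    rw [h4, hquad h hdiff hint, hha]; simp
  have e2 : ∫ z in Metric.ball a r, (h z).re = 0 := by
    rw [qd_disc_mean_re h a r (hdiff.mono hsub) (hre.mono_set hsub), hha]; simp
  have e3 : ∫ z in Ω \ Metric.ball a r, (h z).re = 0 := by
    rw [integral_diff measurableSet_ball hre hsub, e1, e2, sub_zero]
  have hge : ∀ z ∈ Ω \ Metric.ball a r, 1 ≤ (h z).re := by
    rintro z ⟨hz, hzr⟩
    have hz0 := hzw z hz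
    have hn : 0 < Complex.normSq (z - w) := Complex.normSq_pos.2 hz0
    have hzr' : dist a w ≤ dist z a := by simpa using hzr
    rw [Complex.dist_eq, Complex.dist_eq] at hzr'
    have hsq : Complex.normSq (a - w) ≤ Complex.normSq (z - a) := by
      rw [Complex.normSq_eq_norm_sq, Complex.normSq_eq_norm_sq]
      gcongr
    have : (h z).re = 1 + (Complex.normSq (z - a) - Complex.normSq (a - w)) / Complex.normSq (z - w) := by
      simp only [hh, Complex.add_re, Complex.mul_re, Complex.inv_re, Complex.inv_im, Complex.mul_im]
      field_simp
      simp [Complex.normSq_apply]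
      ring
    rw [this]
    have := div_nonneg (sub_nonneg.2 hsq) hn.le
    linarith
  have hmD : MeasurableSet (Ω \ Metric.ball a r) := hΩopen.measurableSet.diff measurableSet_ball
  have hfD : volume (Ω \ Metric.ball a r) ≠ ⊤ := measure_ne_top_of_subset Set.diff_subset hfin
  have hnull : volume (Ω \ Metric.ball a r) = 0 := by
    have := setIntegral_mono_on (f := fun _ => (1:ℝ)) (integrableOn_const hfD)
      (hre.mono_set Set.diff_subset) hmD hge
    rw [e3] at this
    simp only [setIntegral_const, smul_eq_mul, mul_one] at this
    have h0 := le_antisymm this measureReal_nonneg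
    rwa [measureReal_eq_zero_iff hfD] at h0
  have hΩ : Ω = Metric.ball a r := by
    apply Set.Subset.antisymm _ hsub
    have h1 : Ω ⊆ Metric.closedBall a r := by
      have : Ω \ Metric.closedBall a r = ∅ := by
        rw [← (hΩopen.sdiff Metric.isClosed_closedBall).measure_eq_zero_iff volume]
        exact measure_mono_null (Set.diff_subset_diff_right Metric.ball_subset_closedBall) hnull
      exact Set.diff_eq_empty.1 this
    rw [← interior_closedBall a hrpos.ne']
    exact interior_maximal h1 hΩopen
  intro u hu hui
  have hu' := qd_harmonic u Ω hΩopen hu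
  rw [hΩ] at hu'
  obtain ⟨F, hF, hFu⟩ := hu'.exists_analyticOnNhd_ball_re_eq
  have hcong : ∫ z in Ω, u z = ∫ z in Metric.ball a r, (F z).re := by
    rw [hΩ]
    exact (setIntegral_congr_fun measurableSet_ball hFu).symm
  rw [hΩ] at hui
  have hFi : IntegrableOn (fun z => (F z).re) (Metric.ball a r) :=
    hui.congr_fun hFu.symm measurableSet_ball
  rw [hcong, qd_disc_mean_re F a r hF.differentiableOn hFi, hc, hΩ,
    ← hFu (Metric.mem_ball_self hrpos), measureReal_def]
  push_cast
  rfl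
end
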